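/- arXiv:2505.15826 — 7 statements merged into one kernel-verified Lean document; each statement's English description precedes it below -/
import Mathlib

section
/- For every integer n ≥ 1, the number of parking functions of length n equals (n+1)^(n−1). -/
/-- A sequence `x : Fin n → Fin n` (so with values in `{0,…,n-1}`) is a *parking function*
of length `n` if its weakly increasing rearrangement `z = x ∘ σ` satisfies `z i ≤ i`
(0-indexed; equivalently `z_i ≤ i - 1` in 1-indexed notation). -/
def IsParkingFunction {n : ℕ} (x : Fin n → Fin n) : Prop :=
  ∃ σ : Equiv.Perm (Fin n), Monotone (x ∘ σ) ∧ ∀ i : Fin n, (x (σ i) : ℕ) ≤ (i : ℕ)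

/-!
Pollak's circular argument. Let `n` cars choose spots on a circle of `n + 1` spots; rotating the
circle acts on these `(n + 1) ^ n` choices, and every choice has exactly one rotation that is a
parking function. Indeed, let `s m` be the number of cars choosing one of the first `m` spots minus
`m`. Moving the origin to `c` gives a parking function iff `s c ≤ s (c + k)` for all `k ≤ n`, and
since `s` drops by exactly `1` per turn, the only such `c ≤ n` is the first minimum of `s` on
`{0, …, n}`.
-/

open Finset

theorem existsUnique_forall_le_add_of_covBy {α : Type*} [LinearOrder α] {N : ℕ} (hN : N ≠ 0)
    {f : ℕ → α} (hf : ∀ m, f (m + N) ⋖ f m) :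
    ∃! c, c < N ∧ ∀ k < N, f c ≤ f (c + k) := by
  refine existsUnique_of_exists_of_unique ?_ ?_
  · obtain ⟨c, hcN, hmin⟩ := exists_min_image (range N) (fun c ↦ toLex (f c, c))
      (nonempty_range_iff.2 hN)
    simp only [mem_range, Prod.Lex.toLex_le_toLex] at hcN hmin
    refine ⟨c, hcN, fun k hk ↦ ?_⟩
    obtain hlt | hge := lt_or_ge (c + k) N
    · exact (hmin _ hlt).elim le_of_lt fun h ↦ h.1.le
    · obtain ⟨m, hm⟩ := Nat.exists_eq_add_of_le' hge
      have hfirst : f c < f m := (hmin m (by lia)).resolve_right fun h ↦ by lia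
      exact hm ▸ (hf m).le_of_lt hfirst
  · have not_lt_of_minimal {c d : ℕ} (hd : d < N) (hc_min : ∀ k < N, f c ≤ f (c + k))
        (hd_min : ∀ k < N, f d ≤ f (d + k)) : ¬ c < d := fun hcd ↦ by
      have hle_cd := hc_min (d - c) (by lia)
      have hle_dc := hd_min (c + N - d) (by lia)
      rw [Nat.add_sub_cancel' (by lia)] at hle_cd hle_dc
      exact ((hle_cd.trans hle_dc).trans_lt (hf c).lt).false
    rintro c d ⟨hc, hc_min⟩ ⟨hd, hd_min⟩
    exact le_antisymm (not_lt.1 (not_lt_of_minimal hc hd_min hc_min))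
      (not_lt.1 (not_lt_of_minimal hd hc_min hd_min))

theorem card_mul_card_subtype_of_existsUnique_vadd {G X : Type*} [AddGroup G] [AddAction G X]
    {p : X → Prop} (hp : ∀ x, ∃! g : G, p (g +ᵥ x)) :
    Nat.card G * Nat.card {x // p x} = Nat.card X := by
  let translate : G × {x // p x} → X := fun s ↦ -s.1 +ᵥ s.2.1
  have hinj : translate.Injective := by
    rintro ⟨g, x, hx⟩ ⟨h, y, hy⟩ (hxy : -g +ᵥ x = -h +ᵥ y)
    obtain rfl : g = h := (hp (-g +ᵥ x)).unique (by rwa [vadd_neg_vadd])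
      (by rwa [hxy, vadd_neg_vadd])
    obtain rfl : x = y := vadd_left_cancel _ hxy
    rfl
  have hsurj : translate.Surjective := fun x ↦
    let ⟨g, hg⟩ := (hp x).exists
    ⟨(g, ⟨g +ᵥ x, hg⟩), neg_vadd_vadd g x⟩
  rw [← Nat.card_prod, Nat.card_congr (.ofBijective translate ⟨hinj, hsurj⟩)]

/-- The counting form of the parking condition: at least `k` of the values of `x` are below `k`, for
every `k` up to the length. It is stated for natural-valued `x` on any finite index type so that it
applies to values in `Fin n` and to representatives of residue classes alike. -/
def HasParkingCounts {ι : Type*} [Fintype ι] (x : ι → ℕ) : Prop :=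
  ∀ k ≤ Fintype.card ι, k ≤ #{i | x i < k}

section HasParkingCounts

variable {ι κ : Type*} [Fintype ι] [Fintype κ]

theorem hasParkingCounts_comp_equiv (e : κ ≃ ι) (x : ι → ℕ) :
    HasParkingCounts (x ∘ e) ↔ HasParkingCounts x := by
  have hcount (k : ℕ) : #{j | x (e j) < k} = #{i | x i < k} :=
    card_equiv e fun j ↦ by simp
  simp only [HasParkingCounts, Function.comp_apply, hcount, Fintype.card_congr e]

theorem HasParkingCounts.lt_card {x : ι → ℕ} (hx : HasParkingCounts x) (i : ι) :
    x i < Fintype.card ι :=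
  card_filter_eq_iff.1 (le_antisymm (card_filter_le _ _) (hx _ le_rfl)) i (mem_univ i)

theorem hasParkingCounts_iff_of_monotone {n : ℕ} {z : Fin n → ℕ} (hz : Monotone z) :
    HasParkingCounts z ↔ ∀ i, z i ≤ i := by
  constructor
  · intro hcounts i
    by_contra! hi
    have hsub : ({j | z j < i + 1} : Finset (Fin n)) ⊆ Iio i := fun j hj ↦ by
      have hji : z j < i + 1 := (mem_filter.1 hj).2
      exact mem_Iio.2 (hz.reflect_lt (hji.trans_le hi))
    have hcard := (hcounts (i + 1) (by simp)).trans (card_le_card hsub)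
    simp at hcard
  · intro hle k hk
    calc
      k = #{i : Fin n | i < k} := by rw [Fin.card_filter_val_lt, min_eq_right (by simpa using hk)]
      _ ≤ #{i | z i < k} := card_le_card <| monotone_filter_right _ fun i _ hi ↦ (hle i).trans_lt hi

theorem isParkingFunction_iff_hasParkingCounts {n : ℕ} (x : Fin n → Fin n) :
    IsParkingFunction x ↔ HasParkingCounts (Fin.val ∘ x) := by
  have iff_of_sorted {σ : Equiv.Perm (Fin n)} (hσ : Monotone (x ∘ σ)) :
      HasParkingCounts (Fin.val ∘ x) ↔ ∀ i, (x (σ i) : ℕ) ≤ i := by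
    rw [← hasParkingCounts_comp_equiv σ]
    exact hasParkingCounts_iff_of_monotone (Fin.val_strictMono.monotone.comp hσ)
  constructor
  · rintro ⟨σ, hσ, hle⟩
    exact (iff_of_sorted hσ).2 hle
  · intro hx
    exact ⟨Tuple.sort x, Tuple.monotone_sort x, (iff_of_sorted (Tuple.monotone_sort x)).1 hx⟩

theorem card_hasParkingCounts_comp {β : Type*} {v : β → ℕ} (hv : v.Injective)
    (hrange : ∀ m < Fintype.card ι, m ∈ Set.range v) :
    Nat.card {y : ι → β // HasParkingCounts (v ∘ y)} =
      Nat.card {x : ι → ℕ // HasParkingCounts x} := by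
  refine Nat.card_congr (.ofBijective (Subtype.map (v ∘ ·) fun _ ↦ id)
    ⟨Subtype.map_injective _ hv.comp_left, ?_⟩)
  rintro ⟨x, hx⟩
  choose y hy using fun i ↦ hrange (x i) (hx.lt_card i)
  obtain rfl : v ∘ y = x := funext hy
  exact ⟨⟨y, hx⟩, rfl⟩

end HasParkingCounts

section Circle

variable {ι : Type*} [Fintype ι] {N : ℕ}

/-- For cars `i` choosing spots `y i` on a circle of `N` spots, the number of cars choosing one of
the first `m` spots, minus `m`. Here `m` may exceed `N`, and a spot passed several times is then
counted each time. -/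
def surplus (y : ι → ZMod N) (m : ℕ) : ℤ :=
  (∑ j ∈ range m, (#{i | y i = j} : ℤ)) - m

variable [NeZero N]

theorem zmod_val_sub_eq_iff (a b : ZMod N) {j : ℕ} (hj : j < N) : (a - b).val = j ↔ a = b + j := by
  rw [← sub_eq_iff_eq_add', ← (ZMod.val_injective N).eq_iff, ZMod.val_cast_of_lt hj]

theorem card_filter_val_sub_lt (y : ι → ZMod N) (c : ZMod N) {k : ℕ} (hk : k ≤ N) :
    #{i | (y i - c).val < k} = ∑ j ∈ range k, #{i | y i = c + j} := by
  rw [card_eq_sum_card_fiberwise (f := fun i ↦ (y i - c).val) (t := range k)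
    fun i hi ↦ by simpa using hi]
  refine sum_congr rfl fun j hj ↦ ?_
  have hjk := mem_range.1 hj
  rw [filter_filter]
  congr! 2 with i
  rw [← zmod_val_sub_eq_iff _ _ (hjk.trans_le hk)]
  lia

theorem surplus_add (y : ι → ZMod N) (c : ℕ) {k : ℕ} (hk : k ≤ N) :
    surplus y (c + k) = surplus y c + #{i | (y i - c).val < k} - k := by
  rw [card_filter_val_sub_lt y c hk]
  simp only [surplus, sum_range_add]
  push_cast
  ring

theorem surplus_add_modulus (y : ι → ZMod N) (c : ℕ) :
    surplus y (c + N) = surplus y c + Fintype.card ι - N := by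
  rw [surplus_add y c le_rfl, filter_true_of_mem fun i _ ↦ ZMod.val_lt _, card_univ]

theorem hasParkingCounts_val_sub_iff (hN : Fintype.card ι ≤ N) (y : ι → ZMod N) (c : ℕ) :
    HasParkingCounts (fun i ↦ (y i - c).val) ↔
      ∀ k ≤ Fintype.card ι, surplus y c ≤ surplus y (c + k) := by
  refine forall₂_congr fun k hk ↦ ?_
  rw [surplus_add y c (hk.trans hN)]
  lia

end Circle

theorem existsUnique_hasParkingCounts_val_vadd {ι : Type*} [Fintype ι]
    (y : ι → ZMod (Fintype.card ι + 1)) :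
    ∃! g : ZMod (Fintype.card ι + 1), HasParkingCounts (ZMod.val ∘ (g +ᵥ y)) := by
  have hdrop (m : ℕ) : surplus y (m + (Fintype.card ι + 1)) ⋖ surplus y m := by
    rw [surplus_add_modulus, Order.covBy_iff_add_one_eq]
    lia
  have hcounts_iff (g : ZMod (Fintype.card ι + 1)) : HasParkingCounts (ZMod.val ∘ (g +ᵥ y)) ↔
      ∀ k < Fintype.card ι + 1, surplus y (-g).val ≤ surplus y ((-g).val + k) := by
    have h := hasParkingCounts_val_sub_iff (Nat.le_succ _) y (-g).val
    simp only [ZMod.natCast_zmod_val, sub_neg_eq_add, add_comm _ g, ← Nat.lt_add_one_iff] at h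
    exact h
  obtain ⟨c, ⟨hc, hc_min⟩, hc_unique⟩ :=
    existsUnique_forall_le_add_of_covBy (Nat.succ_ne_zero _) hdrop
  refine ⟨-c, (hcounts_iff _).2 ?_, fun g hg ↦ ?_⟩
  · rwa [neg_neg, ZMod.val_cast_of_lt hc]
  · have hval : (-g).val = c := hc_unique _ ⟨ZMod.val_lt _, (hcounts_iff g).1 hg⟩
    rw [← hval, ZMod.natCast_zmod_val, neg_neg]

theorem card_mul_card_hasParkingCounts (ι : Type*) [Fintype ι] :
    (Fintype.card ι + 1) * Nat.card {x : ι → ℕ // HasParkingCounts x} =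
      (Fintype.card ι + 1) ^ Fintype.card ι := by
  let N := Fintype.card ι + 1
  have hrange (m : ℕ) (hm : m < Fintype.card ι) : m ∈ Set.range (ZMod.val : ZMod N → ℕ) :=
    ⟨m, ZMod.val_cast_of_lt (hm.trans (Nat.lt_succ_self _))⟩
  calc
    N * Nat.card {x : ι → ℕ // HasParkingCounts x}
      = Nat.card (ZMod N) * Nat.card {y : ι → ZMod N // HasParkingCounts (ZMod.val ∘ y)} := by
        rw [Nat.card_zmod, card_hasParkingCounts_comp (ZMod.val_injective N) hrange]
    _ = Nat.card (ι → ZMod N) :=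
        card_mul_card_subtype_of_existsUnique_vadd existsUnique_hasParkingCounts_val_vadd
    _ = N ^ Fintype.card ι := by rw [Nat.card_fun, Nat.card_zmod, Nat.card_eq_fintype_card]

/-- For every `n ≥ 1`, the number of parking functions of length `n` is `(n+1)^(n-1)`. -/
theorem card_parkingFunctions (n : ℕ) (hn : 1 ≤ n) :
    Nat.card {x : Fin n → Fin n // IsParkingFunction x} = (n + 1) ^ (n - 1) := by
  have hcount : Nat.card {x : Fin n → Fin n // IsParkingFunction x} =
      Nat.card {x : Fin n → ℕ // HasParkingCounts x} := by
    simp only [isParkingFunction_iff_hasParkingCounts]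
    exact card_hasParkingCounts_comp Fin.val_injective (by simp)
  have hrotations := card_mul_card_hasParkingCounts (Fin n)
  rw [Fintype.card_fin, ← hcount, ← mul_pow_sub_one (by lia)] at hrotations
  exact Nat.eq_of_mul_eq_mul_left n.succ_pos hrotations
end

section
/- For every integer n ≥ 1, the number of weakly increasing parking functions of length n (i.e., parking functions (x_1,…,x_n) with x_1 ≤ x_2 ≤ … ≤ x_n) equals the n-th Catalan number Cat_n = (1/(n+1))·binomial(2n, n). -/
/-!
A weakly increasing sequence is its own increasing rearrangement, so the objects to count are the
weakly increasing `x` with `x i ≤ i`. Refine the count by a cap `k ≤ n` on all entries. For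
`0 < k < n` the last entry is either at most `k - 1`, which lowers the cap, or equal to `k`, and
then deleting it leaves a sequence of length `n - 1` with the same cap. The ballot numbers
`(n + 1 - k) / (n + 1) * (n + k).choose k` satisfy the same recurrence. For `k = n` only the first
case occurs, and correspondingly the ballot number of `(n - 1, n)` vanishes.
-/

theorem monotone_snoc_iff {α : Type*} [Preorder α] {n : ℕ} {x : Fin n → α} {a : α} :
    Monotone (Fin.snoc x a : Fin (n + 1) → α) ↔ Monotone x ∧ ∀ i, x i ≤ a := by
  simp only [Monotone, Fin.forall_fin_succ', Fin.snoc_castSucc, Fin.snoc_last,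
    Fin.castSucc_le_castSucc_iff, Fin.le_last, Fin.last_le_iff, Fin.castSucc_ne_last,
    forall_const, false_imp_iff, implies_true, le_refl, and_true, forall_and]

/-- The weakly increasing sequences of length `n` whose `i`-th entry (0-indexed) is at most `u i`
and all of whose entries are at most `k`. Without the cap `k` these are the increasing
vector parking functions of `u`; the cap is the second parameter of the counting recurrence. -/
def monotoneBelow (u : ℕ → ℕ) (n k : ℕ) : Set (Fin n → ℕ) :=
  {x | Monotone x ∧ (∀ i, x i ≤ u i) ∧ ∀ i, x i ≤ k}

section monotoneBelow

variable {u : ℕ → ℕ} {n k : ℕ}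

theorem finite_monotoneBelow : (monotoneBelow u n k).Finite :=
  (Set.finite_Iic fun _ : Fin n => k).subset fun _ hx => hx.2.2

theorem monotoneBelow_zero_right : monotoneBelow u n 0 = {0} := by
  ext x
  constructor
  · rintro ⟨-, -, hx⟩
    exact funext fun i => Nat.le_zero.mp (hx i)
  · rintro rfl
    exact ⟨monotone_const, fun _ => Nat.zero_le _, fun _ => le_rfl⟩

theorem snoc_mem_monotoneBelow_iff {x : Fin n → ℕ} {a : ℕ} :
    (Fin.snoc x a : Fin (n + 1) → ℕ) ∈ monotoneBelow u (n + 1) k ↔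
      x ∈ monotoneBelow u n a ∧ a ≤ u n ∧ a ≤ k := by
  simp only [monotoneBelow, Set.mem_ofPred_eq, monotone_snoc_iff, Fin.forall_fin_succ',
    Fin.snoc_castSucc, Fin.snoc_last, Fin.val_castSucc, Fin.val_last]
  constructor
  · rintro ⟨⟨hmono, hxa⟩, ⟨hxu, hau⟩, -, hak⟩
    exact ⟨⟨hmono, hxu, hxa⟩, hau, hak⟩
  · rintro ⟨⟨hmono, hxu, hxa⟩, hau, hak⟩
    exact ⟨⟨hmono, hxa⟩, ⟨hxu, hau⟩, fun i => (hxa i).trans hak, hak⟩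

theorem monotoneBelow_succ_succ_of_le (h : u n ≤ k) :
    monotoneBelow u (n + 1) (k + 1) = monotoneBelow u (n + 1) k := by
  ext x
  cases x using Fin.snocCases with | snoc y a => ?_
  simp only [snoc_mem_monotoneBelow_iff]
  exact and_congr_right fun _ =>
    ⟨fun ⟨hau, _⟩ => ⟨hau, hau.trans h⟩, fun ⟨hau, hak⟩ => ⟨hau, hak.trans k.le_succ⟩⟩

theorem monotoneBelow_succ_succ_of_lt (h : k < u n) :
    monotoneBelow u (n + 1) (k + 1) =
      monotoneBelow u (n + 1) k ∪ (Fin.snoc · (k + 1)) '' monotoneBelow u n (k + 1) := by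
  ext x
  cases x using Fin.snocCases with | snoc y a => ?_
  simp only [Set.mem_union, Set.mem_image, snoc_mem_monotoneBelow_iff, Fin.snoc_inj]
  constructor
  · rintro ⟨hy, hau, hak⟩
    rcases Nat.le_succ_iff.mp hak with hak | rfl
    · exact .inl ⟨hy, hau, hak⟩
    · exact .inr ⟨y, hy, rfl, rfl⟩
  · rintro (⟨hy, hau, hak⟩ | ⟨_, hy, rfl, rfl⟩)
    · exact ⟨hy, hau, hak.trans k.le_succ⟩
    · exact ⟨hy, h, le_rfl⟩

theorem ncard_monotoneBelow_succ_succ_of_lt (h : k < u n) :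
    (monotoneBelow u (n + 1) (k + 1)).ncard =
      (monotoneBelow u (n + 1) k).ncard + (monotoneBelow u n (k + 1)).ncard := by
  have hdisj : Disjoint (monotoneBelow u (n + 1) k)
      ((Fin.snoc · (k + 1)) '' monotoneBelow u n (k + 1)) := by
    rw [Set.disjoint_right]
    rintro _ ⟨y, -, rfl⟩ hy
    exact (snoc_mem_monotoneBelow_iff.mp hy).2.2.not_gt k.lt_succ_self
  rw [monotoneBelow_succ_succ_of_lt h,
    Set.ncard_union_eq hdisj finite_monotoneBelow (finite_monotoneBelow.image _),
    Set.ncard_image_of_injective _ (Fin.snoc_left_injective (α := fun _ => ℕ) _)]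

end monotoneBelow

/-- The ballot number: for `k ≤ n`, the number of lattice paths from `(0, 0)` to `(n, k)` with unit
east and north steps that stay weakly below the diagonal. It is rational-valued so that neither the
subtraction nor the division truncates. -/
def ballotNumber (n k : ℕ) : ℚ :=
  (n + 1 - k) / (n + 1) * (n + k).choose k

theorem ballotNumber_zero_right (n : ℕ) : ballotNumber n 0 = 1 := by
  have : (n + 1 : ℚ) ≠ 0 := by positivity
  simp [ballotNumber, this]

theorem ballotNumber_self (n : ℕ) : ballotNumber n n = (2 * n).choose n / (n + 1) := by
  rw [ballotNumber, ← two_mul, add_sub_cancel_left, one_div_mul_eq_div]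

theorem ballotNumber_succ_right_self (n : ℕ) : ballotNumber n (n + 1) = 0 := by
  simp [ballotNumber]

theorem ballotNumber_succ_succ (n k : ℕ) :
    ballotNumber (n + 1) (k + 1) = ballotNumber (n + 1) k + ballotNumber n (k + 1) := by
  have pascal : ((n + k + 2).choose (k + 1) : ℚ) =
      (n + k + 1).choose k + (n + k + 1).choose (k + 1) := mod_cast Nat.choose_succ_succ' _ _
  have absorption : ((n + k + 1).choose (k + 1) * (k + 1) : ℚ) =
      (n + k + 1).choose k * (n + 1) := by
    have := Nat.choose_succ_right_eq (n + k + 1) k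
    rw [show n + k + 1 - k = n + 1 by omega] at this
    exact_mod_cast this
  simp only [ballotNumber, show n + 1 + (k + 1) = n + k + 2 by ring,
    show n + 1 + k = n + k + 1 by ring, show n + (k + 1) = n + k + 1 by ring, pascal]
  push_cast
  field_simp
  linear_combination absorption

theorem ncard_monotoneBelow_id_eq_ballotNumber {n k : ℕ} (hk : k ≤ n) :
    ((monotoneBelow id n k).ncard : ℚ) = ballotNumber n k := by
  induction n generalizing k with
  | zero =>
    obtain rfl := Nat.le_zero.mp hk
    rw [monotoneBelow_zero_right, Set.ncard_singleton, ballotNumber_zero_right, Nat.cast_one]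
  | succ n ih_length =>
    induction k with
    | zero =>
      rw [monotoneBelow_zero_right, Set.ncard_singleton, ballotNumber_zero_right, Nat.cast_one]
    | succ k ih_cap =>
      rw [ballotNumber_succ_succ, ← ih_cap (by omega)]
      rcases (Nat.le_of_succ_le_succ hk).lt_or_eq with hlt | rfl
      · rw [ncard_monotoneBelow_succ_succ_of_lt hlt, Nat.cast_add, ih_length hlt]
      · rw [monotoneBelow_succ_succ_of_le (id_eq k).le, ballotNumber_succ_right_self, add_zero]

theorem isParkingFunction_iff_of_monotone {n : ℕ} {x : Fin n → Fin n} (hx : Monotone x) :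
    IsParkingFunction x ↔ ∀ i, x i ≤ i := by
  constructor
  · rintro ⟨σ, hσ, hle⟩ i
    have hxσ : x ∘ σ = x := Tuple.unique_monotone (τ := Equiv.refl _) hσ hx
    exact (congrFun hxσ i).symm.trans_le (hle i)
  · exact fun h => ⟨Equiv.refl _, hx, h⟩

theorem image_val_monotone_parkingFunctions (n : ℕ) :
    (Fin.val ∘ ·) '' {x : Fin n → Fin n | IsParkingFunction x ∧ Monotone x} =
      monotoneBelow id n n := by
  ext y
  constructor
  · rintro ⟨x, ⟨hpark, hmono⟩, rfl⟩
    exact ⟨hmono, (isParkingFunction_iff_of_monotone hmono).mp hpark, fun i => (x i).isLt.le⟩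
  · rintro ⟨hmono, hle, -⟩
    let x : Fin n → Fin n := fun i => ⟨y i, (hle i).trans_lt i.isLt⟩
    have hx : Monotone x := hmono
    exact ⟨x, ⟨(isParkingFunction_iff_of_monotone hx).mpr hle, hx⟩, rfl⟩

/-- For every `n ≥ 1`, the number of weakly increasing parking functions of length `n`
equals the `n`-th Catalan number `(1/(n+1)) * (2n choose n)`. -/
theorem card_monotone_parkingFunctions (n : ℕ) (hn : 1 ≤ n) :
    (Nat.card {x : Fin n → Fin n // IsParkingFunction x ∧ Monotone x} : ℚ) =
      (Nat.choose (2 * n) n : ℚ) / ((n : ℚ) + 1) := by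
  have hcard : Nat.card {x : Fin n → Fin n // IsParkingFunction x ∧ Monotone x} =
      (monotoneBelow id n n).ncard := by
    rw [← image_val_monotone_parkingFunctions,
      Set.ncard_image_of_injective _ Fin.val_injective.comp_left]
    rfl
  rw [hcard, ncard_monotoneBelow_id_eq_ballotNumber le_rfl, ballotNumber_self]
end

section
/- (Konheim–Weiss, Lemma 1) For every integer n ≥ 1, the sum over all permutations π of {1,…,n} of the product ∏_{j=1}^{n} τ_{j,n}(π) equals (n+1)^(n−1), where for a permutation π = (π_1,…,π_n) in one-line notation, τ_{j,n}(π) = max{ k : 1 ≤ k ≤ j and π_j ≥ π_m for all m with j−k+1 ≤ m ≤ j } is the length of the longest block of consecutive positions ending at j on which π_j is the maximum. -/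
/-- For a permutation `π` of `Fin n` (0-indexed one-line notation) and a position `j`,
`tau n π j` is the largest `k` with `1 ≤ k ≤ j+1` such that `π j ≥ π m` for all positions
`m` with `j+1-k ≤ m ≤ j` (this is `τ_{j,n}(π)` in 1-indexed notation: the length of the
longest block of consecutive positions ending at `j` on which `π j` is the maximum).
Since the set of such `k` is a nonempty finite set of naturals, its maximum is its `sup`. -/
def tau (n : ℕ) (π : Equiv.Perm (Fin n)) (j : Fin n) : ℕ :=
  ((Finset.Icc 1 ((j : ℕ) + 1)).filter
    (fun k => ∀ m : Fin n, (j : ℕ) + 1 - k ≤ (m : ℕ) → (m : ℕ) ≤ (j : ℕ) → π m ≤ π j)).sup id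

/-!
Pollak's circle argument. Cars `0, …, n - 1` arrive in turn at a circle with `n + 1` spots; each car
names a preferred spot and takes the first free spot from there on. All `(n + 1) ^ n` preference
lists succeed and leave exactly one spot empty, so by rotational symmetry a given spot stays empty
for `(n + 1) ^ (n - 1)` of them. If the last spot stays empty then no car ever drives past it, and
the cars fill the first `n` spots according to a permutation: car `π j` ends up in spot `j`. At that
moment the occupied spots are those `m` with `π m < π j`, so the preferences that lead this car to
spot `j` are the starting points of the blocks ending at `j` on which `π j` is the maximum, and
there are `τ_j(π)` of them.
-/

open Finset Function

section FunctionSums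

variable {ι M : Type*} [Fintype ι] [DecidableEq ι] [AddCommMonoid M]

theorem sum_perm_eq_sum_of_forall_not_injective {F : (ι → ι) → M}
    (hF : ∀ f, ¬Injective f → F f = 0) : ∑ π : Equiv.Perm ι, F π = ∑ f, F f := by
  refine Fintype.sum_of_injective (fun π : Equiv.Perm ι ↦ ⇑π) DFunLike.coe_injective _ _ ?_
    fun _ ↦ rfl
  intro f hf
  refine hF f fun hinj ↦ hf ?_
  exact ⟨Equiv.ofBijective f (Finite.injective_iff_bijective.mp hinj), rfl⟩

theorem sum_comp_eq_sum_piFinset_image {α β : Type*} [Fintype α] [DecidableEq β] {e : α → β}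
    (he : Injective e) (F : (ι → β) → M) :
    ∑ g : ι → α, F (e ∘ g) = ∑ f ∈ Fintype.piFinset fun _ ↦ univ.image e, F f := by
  refine sum_of_injOn (e ∘ ·) he.comp_left.injOn (fun g _ ↦ by simp) ?_ fun _ _ ↦ rfl
  intro f hf hf'
  choose g _ hg using fun i ↦ mem_image.mp (Fintype.mem_piFinset.mp hf i)
  exact absurd ⟨g, mem_coe.mpr (mem_univ g), funext hg⟩ hf'

variable {G : Type*} [AddGroup G] [Fintype G] [DecidableEq G]

theorem sum_piFinset_compl_singleton_eq_of_add_right {F : (ι → G) → M}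
    (hadd : ∀ f t, F (fun i ↦ f i + t) = F f) (c c' : G) :
    ∑ f ∈ Fintype.piFinset fun _ ↦ {c}ᶜ, F f = ∑ f ∈ Fintype.piFinset fun _ ↦ {c'}ᶜ, F f := by
  refine sum_equiv (Equiv.addRight fun _ ↦ -c + c') (fun f ↦ ?_) fun f _ ↦ (hadd f _).symm
  have hmove (i : ι) : f i + (-c + c') = c' ↔ f i = c := by
    rw [← add_assoc, add_eq_right, add_neg_eq_zero]
  simp [hmove]

theorem card_nsmul_sum_piFinset_compl_singleton {F : (ι → G) → M}
    (hF : ∀ f, ¬Injective f → F f = 0) (hadd : ∀ f t, F (fun i ↦ f i + t) = F f)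
    (hcard : Fintype.card G = Fintype.card ι + 1) (c : G) :
    Fintype.card G • ∑ f ∈ Fintype.piFinset fun _ ↦ {c}ᶜ, F f = ∑ f, F f := by
  have sum_missed (f : ι → G) : ∑ _c' ∈ (univ.image f)ᶜ, F f = F f := by
    by_cases hf : Injective f
    · rw [sum_const, card_compl, card_image_of_injective univ hf, card_univ, hcard,
        Nat.add_sub_cancel_left, one_nsmul]
    · rw [hF f hf, sum_const_zero]
  calc Fintype.card G • ∑ f ∈ Fintype.piFinset fun _ ↦ {c}ᶜ, F f
      = ∑ c', ∑ f ∈ Fintype.piFinset fun _ ↦ {c'}ᶜ, F f := by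
        rw [sum_congr rfl fun c' _ ↦ sum_piFinset_compl_singleton_eq_of_add_right hadd c' c,
          sum_const, card_univ]
    _ = ∑ f, ∑ _c' ∈ (univ.image f)ᶜ, F f := sum_comm' fun c' f ↦ by simp
    _ = ∑ f, F f := sum_congr rfl fun f _ ↦ sum_missed f

end FunctionSums

section SeqWeight

variable {α R : Type*} [CommSemiring R] {w : Set α → α → R} {k : ℕ}

/-- The total weight of choosing the values `f 0, f 1, …` one after the other, where `w S x` is the
weight of choosing `x` when the set of earlier values is `S`. -/
def seqWeight (w : Set α → α → R) (f : Fin k → α) : R :=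
  ∏ i, w (f '' Set.Iio i) (f i)

theorem seqWeight_snoc (f : Fin k → α) (x : α) :
    seqWeight w (Fin.snoc f x : Fin (k + 1) → α) = seqWeight w f * w (Set.range f) x := by
  have himage (s : Set (Fin k)) :
      (Fin.snoc f x : Fin (k + 1) → α) '' (Fin.castSucc '' s) = f '' s := by
    rw [← Set.image_comp, Fin.snoc_comp_castSucc]
  have hlast : Set.Iio (Fin.last k) = Fin.castSucc '' Set.univ := by
    rw [Set.image_univ, Fin.range_castSucc]
    rfl
  simp only [seqWeight, Fin.prod_univ_castSucc, Fin.snoc_castSucc, Fin.snoc_last, hlast,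
    ← Fin.image_castSucc_Iio, himage]
  rw [Set.image_univ]

theorem sum_seqWeight [Fintype α] {c : R}
    (hw : ∀ S : Set α, S.ncard < k → ∑ x, w S x = c) :
    ∑ f : Fin k → α, seqWeight w f = c ^ k := by
  induction k with
  | zero => simp [seqWeight]
  | succ k ih =>
    have hrange (f : Fin k → α) : (Set.range f).ncard < k + 1 := by
      rw [← Set.image_univ, Nat.lt_succ_iff]
      exact (Set.ncard_image_le Set.finite_univ).trans (by simp)
    calc ∑ f : Fin (k + 1) → α, seqWeight w f
        = ∑ f : Fin k → α, ∑ x, seqWeight w (Fin.snoc f x : Fin (k + 1) → α) := by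
          rw [← (Fin.snocEquiv fun _ ↦ α).sum_comp, Fintype.sum_prod_type_right]
          rfl
      _ = ∑ f : Fin k → α, seqWeight w f * c := by
          simp only [seqWeight_snoc, ← mul_sum, hw _ (hrange _)]
      _ = c ^ (k + 1) := by
          rw [← sum_mul, ih fun S hS ↦ hw S (hS.trans k.lt_succ_self), pow_succ]

theorem seqWeight_eq_zero_of_not_injective (hw : ∀ S, ∀ x ∈ S, w S x = 0) {f : Fin k → α}
    (hf : ¬Injective f) : seqWeight w f = 0 := by
  obtain ⟨i, i', hlt, heq⟩ : ∃ i i', i < i' ∧ f i = f i' := by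
    simpa [injective_iff_pairwise_ne, pairwise_iff_lt] using hf
  exact prod_eq_zero (mem_univ i') (hw _ _ ⟨i, hlt, heq⟩)

theorem seqWeight_comp {β : Type*} {w' : Set β → β → R} {σ : α → β}
    (hw : ∀ S x, w' (σ '' S) (σ x) = w S x) (f : Fin k → α) :
    seqWeight w' (σ ∘ f) = seqWeight w f :=
  prod_congr rfl fun i _ ↦ by rw [Set.image_comp, comp_apply, hw]

end SeqWeight

section Parking

variable {α β : Type*} {next : α → α} {next' : β → β} {S : Set α} {p j : α}

/-- A car that starts at `p` and moves along `next` finds its first spot outside the set `S` of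
occupied spots at `j`. -/
def ParksAt (next : α → α) (S : Set α) (p j : α) : Prop :=
  ∃ d : ℕ, next^[d] p = j ∧ j ∉ S ∧ ∀ e < d, next^[e] p ∈ S

/-- The number of preferred spots from which a car parks at `j` when the spots in `S` are occupied.
It is meant for finite `α`, as `Set.ncard` is `0` on infinite sets. -/
noncomputable def parkingCount (next : α → α) (S : Set α) (j : α) : ℕ :=
  {p | ParksAt next S p j}.ncard

theorem existsUnique_parksAt (h : ∃ d, next^[d] p ∉ S) : ∃! j, ParksAt next S p j := by
  classical
  refine ⟨next^[Nat.find h] p, ⟨_, rfl, Nat.find_spec h, fun e he ↦ ?_⟩, ?_⟩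
  · exact not_not.mp (Nat.find_min h he)
  · rintro _ ⟨d, rfl, hd, hlt⟩
    rw [(Nat.find_eq_iff h).mpr ⟨hd, fun e he ↦ not_not.mpr (hlt e he)⟩]

theorem parkingCount_eq_zero (hj : j ∈ S) : parkingCount next S j = 0 := by
  have hempty : {p | ParksAt next S p j} = ∅ :=
    Set.eq_empty_of_forall_notMem fun _ ⟨_, _, hj', _⟩ ↦ hj' hj
  rw [parkingCount, hempty, Set.ncard_empty]

theorem sum_parkingCount [Fintype α] (h : ∀ p, ∃ d, next^[d] p ∉ S) :
    ∑ j, parkingCount next S j = Fintype.card α := by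
  classical
  choose spot hspot huniq using fun p ↦ existsUnique_parksAt (h p)
  have hfiber (j : α) : {p | ParksAt next S p j} = ({p | spot p = j} : Finset α) := by
    ext p
    simpa using ⟨fun hp ↦ (huniq p j hp).symm, fun hp ↦ hp ▸ hspot p⟩
  simp only [parkingCount, hfiber, Set.ncard_coe_finset]
  exact (card_eq_sum_card_fiberwise fun _ _ ↦ mem_coe.mpr (mem_univ _)).symm

theorem parksAt_image_iff {σ : α → β} (hσ : Semiconj σ next next') (hinj : Injective σ) :
    ParksAt next' (σ '' S) (σ p) (σ j) ↔ ParksAt next S p j := by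
  simp only [ParksAt, ← (hσ.iterate_right _).eq, hinj.eq_iff, hinj.mem_set_image]

theorem parkingCount_image_equiv {σ : α ≃ β} (hσ : Semiconj σ next next') (S : Set α) (j : α) :
    parkingCount next' (σ '' S) (σ j) = parkingCount next S j := by
  have himage : {p | ParksAt next' (σ '' S) p (σ j)} = σ '' {p | ParksAt next S p j} := by
    ext p
    obtain ⟨p, rfl⟩ := σ.surjective p
    rw [σ.injective.mem_set_image]
    exact parksAt_image_iff hσ σ.injective
  rw [parkingCount, himage, Set.ncard_image_of_injective _ σ.injective, parkingCount]

end Parking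

section Circle

variable {n : ℕ}

theorem val_iterate_add_one {p : Fin (n + 1)} {d : ℕ} (h : p + d ≤ n) :
    ((· + 1)^[d] p : Fin (n + 1)).val = p + d := by
  induction d with
  | zero => rfl
  | succ d ih =>
    rw [iterate_succ_apply', Fin.val_add_one_of_lt' (by rw [ih] <;> omega), ih (by omega)]
    rfl

theorem exists_iterate_add_one_eq (p j : Fin (n + 1)) : ∃ d, (· + 1)^[d] p = j := by
  open Fin.CommRing in
  exact ⟨(j - p).val, by simp⟩

theorem parksAt_add_one_iff {S : Set (Fin (n + 1))} (hS : Fin.last n ∉ S) {p j : Fin (n + 1)} :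
    ParksAt (· + 1) S p j ↔ p ≤ j ∧ j ∉ S ∧ Set.Ico p j ⊆ S := by
  have iterate_sub {m : Fin (n + 1)} (hm : p ≤ m) : (· + 1)^[m.val - p.val] p = m := by
    ext
    rw [val_iterate_add_one] <;> omega
  constructor
  · rintro ⟨d, rfl, hj, hocc⟩
    have no_wrap : p + d ≤ n := by
      by_contra! hlt
      exact hS (iterate_sub (Fin.le_last p) ▸ hocc (n - p) (by omega))
    have hval := val_iterate_add_one no_wrap
    refine ⟨Fin.le_def.mpr (by omega), hj, fun m ⟨hpm, hmj⟩ ↦ ?_⟩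
    rw [← iterate_sub hpm]
    exact hocc _ (by omega)
  · rintro ⟨hle, hj, hocc⟩
    refine ⟨j - p, iterate_sub hle, hj, fun e he ↦ hocc ?_⟩
    have hval := val_iterate_add_one (p := p) (d := e) (by omega)
    exact ⟨Fin.le_def.mpr (by omega), Fin.lt_def.mpr (by omega)⟩

theorem setOf_parksAt_add_one_castSucc (T : Set (Fin n)) (j : Fin n) :
    {p | ParksAt (· + 1) (Fin.castSucc '' T) p j.castSucc} =
      Fin.castSucc '' {p | p ≤ j ∧ j ∉ T ∧ Set.Ico p j ⊆ T} := by
  have hlast : Fin.last n ∉ Fin.castSucc '' T := by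
    rintro ⟨i, -, hi⟩
    exact i.castSucc_ne_last hi
  have hcast (p : Fin n) : ParksAt (· + 1) (Fin.castSucc '' T) p.castSucc j.castSucc ↔
      p ≤ j ∧ j ∉ T ∧ Set.Ico p j ⊆ T := by
    rw [parksAt_add_one_iff hlast, ← Fin.image_castSucc_Ico, Fin.castSucc_le_castSucc_iff,
      (Fin.castSucc_injective n).mem_set_image,
      Set.image_subset_image_iff (Fin.castSucc_injective n)]
  ext p
  cases p using Fin.lastCases with
  | last => simp [parksAt_add_one_iff hlast, Fin.castSucc_ne_last, (Fin.castSucc_lt_last j).not_ge]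
  | cast p =>
    rw [(Fin.castSucc_injective n).mem_set_image]
    exact hcast p

theorem sum_seqWeight_parkingCount_add_one {k : ℕ} (hk : k ≤ n + 1) :
    ∑ f : Fin k → Fin (n + 1), seqWeight (parkingCount (· + 1)) f = (n + 1) ^ k := by
  refine sum_seqWeight fun S hS ↦ ?_
  obtain ⟨x, hx⟩ : ∃ x, x ∉ S := by
    by_contra! hall
    rw [Set.eq_univ_of_forall hall, Set.ncard_univ, Nat.card_fin] at hS
    omega
  rw [sum_parkingCount fun p ↦ ?_, Fintype.card_fin]
  obtain ⟨d, rfl⟩ := exists_iterate_add_one_eq p x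
  exact ⟨d, hx⟩

theorem seqWeight_parkingCount_add_right {k : ℕ} (f : Fin k → Fin (n + 1)) (t : Fin (n + 1)) :
    seqWeight (parkingCount (· + 1)) (fun i ↦ f i + t) = seqWeight (parkingCount (· + 1)) f :=
  seqWeight_comp (σ := Equiv.addRight t)
    (parkingCount_image_equiv fun x ↦ add_right_comm x 1 t) f

end Circle

theorem sup_id_eq_card_of_forall_Ioc_subset {A : Finset ℕ} (hpos : ∀ k ∈ A, 0 < k)
    (hA : ∀ k ∈ A, Ioc 0 k ⊆ A) : A.sup id = #A := by
  have hIoc : A = Ioc 0 (A.sup id) := by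
    rcases A.eq_empty_or_nonempty with rfl | hne
    · rfl
    obtain ⟨k, hk, hsup⟩ := A.exists_mem_eq_sup hne id
    refine Subset.antisymm (fun l hl ↦ mem_Ioc.mpr ⟨hpos l hl, le_sup (f := id) hl⟩) ?_
    rw [hsup]
    exact hA k hk
  conv_rhs => rw [hIoc, Nat.card_Ioc, Nat.sub_zero]

section Tau

variable {n : ℕ}

theorem tau_eq_card (π : Equiv.Perm (Fin n)) (j : Fin n) :
    tau n π j = #{p | p ≤ j ∧ ∀ m ∈ Set.Icc p j, π m ≤ π j} := by
  rw [tau, sup_id_eq_card_of_forall_Ioc_subset]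
  · symm
    refine card_nbij (fun p ↦ j + 1 - p) ?_ ?_ ?_
    · intro p hp
      simp only [coe_filter, mem_univ, true_and, Set.mem_ofPred_eq, mem_Icc] at hp ⊢
      exact ⟨by omega, fun m hpm hmj ↦ hp.2 m ⟨Fin.le_def.mpr (by omega), hmj⟩⟩
    · intro p hp q hq hpq
      simp only [coe_filter, mem_univ, true_and, Set.mem_ofPred_eq] at hp hq hpq
      omega
    · intro k hk
      simp only [coe_filter, mem_Icc, Set.mem_ofPred_eq] at hk
      refine ⟨⟨j + 1 - k, by omega⟩, ?_, by dsimp only; omega⟩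
      simp only [coe_filter, mem_univ, true_and, Set.mem_ofPred_eq]
      exact ⟨Fin.le_def.mpr (by dsimp only; omega), fun m hm ↦ hk.2 m hm.1 hm.2⟩
  · intro k hk
    exact (mem_Icc.mp (mem_filter.mp hk).1).1
  · intro k hk l hl
    simp only [mem_filter, mem_Icc, mem_Ioc] at hk hl ⊢
    exact ⟨by omega, fun m hm ↦ hk.2 m (by omega)⟩

theorem parkingCount_add_one_eq_tau (π : Equiv.Perm (Fin n)) (j : Fin n) :
    parkingCount (· + 1) (Fin.castSucc '' {m | π m < π j}) j.castSucc = tau n π j := by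
  have hset : {p | p ≤ j ∧ j ∉ {m | π m < π j} ∧ Set.Ico p j ⊆ {m | π m < π j}} =
      ({p | p ≤ j ∧ ∀ m ∈ Set.Icc p j, π m ≤ π j} : Finset (Fin n)) := by
    ext p
    simp only [Set.mem_ofPred_eq, lt_irrefl, not_false_eq_true, true_and, coe_filter, mem_univ]
    refine and_congr_right fun _ ↦ ⟨fun h m hm ↦ ?_, fun h m hm ↦ ?_⟩
    · rcases hm.2.eq_or_lt with rfl | hlt
      · exact le_rfl
      · exact (h ⟨hm.1, hlt⟩).le
    · exact (h m ⟨hm.1, hm.2.le⟩).lt_of_ne (π.injective.ne hm.2.ne)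
  rw [parkingCount, setOf_parksAt_add_one_castSucc,
    Set.ncard_image_of_injective _ (Fin.castSucc_injective n), hset, Set.ncard_coe_finset,
    tau_eq_card]

theorem seqWeight_parkingCount_castSucc_comp_symm (π : Equiv.Perm (Fin n)) :
    seqWeight (parkingCount (· + 1)) (Fin.castSucc ∘ π.symm) = ∏ j, tau n π j := by
  refine (Fintype.prod_equiv π _ _ fun j ↦ ?_).symm
  have hearlier : (Fin.castSucc ∘ π.symm) '' Set.Iio (π j) = Fin.castSucc '' {m | π m < π j} := by
    rw [Set.image_comp, π.symm.image_eq_preimage_symm]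
    rfl
  rw [hearlier, comp_apply, π.symm_apply_apply, parkingCount_add_one_eq_tau]

theorem sum_prod_tau_eq_sum_piFinset :
    ∑ π : Equiv.Perm (Fin n), ∏ j, tau n π j =
      ∑ f ∈ Fintype.piFinset fun _ : Fin n ↦ {Fin.last n}ᶜ,
        seqWeight (parkingCount (· + 1)) f := by
  set W : (Fin n → Fin (n + 1)) → ℕ := seqWeight (parkingCount (· + 1))
  calc ∑ π : Equiv.Perm (Fin n), ∏ j, tau n π j
      = ∑ π : Equiv.Perm (Fin n), W (Fin.castSucc ∘ π.symm) := by
        simp only [W, seqWeight_parkingCount_castSucc_comp_symm]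
    _ = ∑ π : Equiv.Perm (Fin n), W (Fin.castSucc ∘ π) :=
        Equiv.sum_comp (Equiv.inv _) fun π : Equiv.Perm (Fin n) ↦ W (Fin.castSucc ∘ π)
    _ = ∑ g : Fin n → Fin n, W (Fin.castSucc ∘ g) :=
        sum_perm_eq_sum_of_forall_not_injective fun g hg ↦
          seqWeight_eq_zero_of_not_injective (fun _ _ ↦ parkingCount_eq_zero) fun h ↦ hg h.of_comp
    _ = ∑ f ∈ Fintype.piFinset fun _ : Fin n ↦ {Fin.last n}ᶜ, W f := by
        rw [sum_comp_eq_sum_piFinset_image (Fin.castSucc_injective n), Fin.image_castSucc]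

end Tau

/-- (Konheim–Weiss, Lemma 1) For every `n ≥ 1`,
`∑_{π ∈ S_n} ∏_{j=1}^{n} τ_{j,n}(π) = (n+1)^(n-1)`. -/
theorem konheim_weiss_lemma1 (n : ℕ) (hn : 1 ≤ n) :
    ∑ π : Equiv.Perm (Fin n), ∏ j : Fin n, tau n π j = (n + 1) ^ (n - 1) := by
  have circle : (n + 1) * ∑ π : Equiv.Perm (Fin n), ∏ j, tau n π j = (n + 1) ^ n := by
    rw [sum_prod_tau_eq_sum_piFinset, ← sum_seqWeight_parkingCount_add_one n.le_succ,
      ← card_nsmul_sum_piFinset_compl_singleton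
        (fun f ↦ seqWeight_eq_zero_of_not_injective fun _ _ ↦ parkingCount_eq_zero)
        seqWeight_parkingCount_add_right (by simp) (Fin.last n),
      Fintype.card_fin, smul_eq_mul]
  rw [← mul_pow_sub_one (Nat.one_le_iff_ne_zero.mp hn)] at circle
  exact Nat.eq_of_mul_eq_mul_left n.succ_pos circle
end

section
/- (Konheim–Weiss, Lemma 2) Fix integers 1 ≤ r ≤ n and a cell c ∈ {0,…,n−1}. The number of preference sequences (j_1,…,j_r) ∈ {0,…,n−1}^r such that, after the circular parking procedure on n cells, cell c is unoccupied, equals n^(r−1)·(n−r). -/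
/-- Circular parking on `n` cells (the cells are `ZMod n`).  Given the list `js` of
preferred cells of the successive cars, `parkCirc n js` is the list of cells occupied by
the cars, in order of arrival: car with preference `jk` parks at `jk + s` where `s` is
the smallest nonnegative integer such that `jk + s (mod n)` is not yet occupied
(such an `s < n` exists as long as some cell is free). -/
def parkCirc (n : ℕ) (js : List (ZMod n)) : List (ZMod n) :=
  js.foldl
    (fun prev jk =>
      let s : ℕ :=
        ((List.range n).find? (fun s : ℕ => decide ((jk + (s : ZMod n)) ∉ prev))).getD 0
      prev ++ [jk + (s : ZMod n)])
    []

/-!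
Rotating all preferences by `a` rotates the set of occupied cells by `a`, so the number of
preference sequences leaving a cell free is the same for every cell. Each sequence leaves exactly
`n - r` of the `n` cells free, so counting pairs (free cell, sequence) in two ways shows that
`n` times the required number is `n ^ r * (n - r)`.
-/

section DoubleCounting

variable {G A B : Type*} [AddGroup G] [AddAction G A] [AddAction G B] {R : A → B → Prop}

theorem card_related_vadd (hR : ∀ (g : G) a b, R (g +ᵥ a) (g +ᵥ b) ↔ R a b) (g : G) (a : A) :
    Nat.card {b // R (g +ᵥ a) b} = Nat.card {b // R a b} :=
  (Nat.card_congr ((AddAction.toPerm g).subtypeEquiv fun b ↦ (hR g a b).symm)).symm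

theorem sum_card_related_comm [Fintype A] [Fintype B] (R : A → B → Prop) :
    ∑ a, Nat.card {b // R a b} = ∑ b, Nat.card {a // R a b} := by
  classical
  simp only [Nat.card_eq_fintype_card, Fintype.card_subtype]
  exact Finset.sum_card_bipartiteAbove_eq_sum_card_bipartiteBelow R

theorem card_mul_card_related_of_isPretransitive [Finite A] [Finite B]
    [AddAction.IsPretransitive G A] (hR : ∀ (g : G) a b, R (g +ᵥ a) (g +ᵥ b) ↔ R a b) {k : ℕ}
    (hk : ∀ b, Nat.card {a // R a b} = k) (a : A) :
    Nat.card A * Nat.card {b // R a b} = Nat.card B * k := by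
  have := Fintype.ofFinite A
  have := Fintype.ofFinite B
  have card_eq (a' : A) : Nat.card {b // R a' b} = Nat.card {b // R a b} := by
    obtain ⟨g, rfl⟩ := AddAction.exists_vadd_eq G a a'
    exact card_related_vadd hR g a
  simpa [card_eq, hk] using sum_card_related_comm R

end DoubleCounting

theorem card_notMem_of_nodup {α : Type*} [Finite α] {l : List α} (hl : l.Nodup) :
    Nat.card {a // a ∉ l} = Nat.card α - l.length := by
  classical
  have := Fintype.ofFinite α
  rw [Nat.card_eq_fintype_card, Nat.card_eq_fintype_card, Fintype.card_subtype_compl,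
    ← List.toFinset_card_of_nodup hl]
  simp [← List.mem_toFinset]

section Parking

variable {n : ℕ}

/-- The cell at which a car with preference `j` parks when the cells in `occ` are taken: the first
free cell among `j, j + 1, …, j + (n - 1)`, or `j` itself if there is none. -/
def firstFreeCell (occ : List (ZMod n)) (j : ZMod n) : ZMod n :=
  j + (((List.range n).find? fun s : ℕ ↦ decide (j + (s : ZMod n) ∉ occ)).getD 0 : ℕ)

theorem firstFreeCell_notMem [NeZero n] {occ : List (ZMod n)} (hocc : ∃ c, c ∉ occ) (j : ZMod n) :
    firstFreeCell occ j ∉ occ := by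
  obtain ⟨c, hc⟩ := hocc
  obtain ⟨s, hs⟩ : ∃ s, (List.range n).find? (fun s : ℕ ↦ decide (j + (s : ZMod n) ∉ occ)) =
      some s := by
    rw [← Option.isSome_iff_exists, List.find?_isSome]
    exact ⟨(c - j).val, List.mem_range.2 (ZMod.val_lt _), by simpa using hc⟩
  have free : j + (s : ZMod n) ∉ occ := by simpa using List.find?_some hs
  rwa [firstFreeCell, hs, Option.getD_some]

theorem firstFreeCell_map_add (a : ZMod n) (occ : List (ZMod n)) (j : ZMod n) :
    firstFreeCell (occ.map (a + ·)) (a + j) = a + firstFreeCell occ j := by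
  simp only [firstFreeCell, add_assoc, List.mem_map_of_injective (add_right_injective a)]

theorem parkCirc_append_singleton (js : List (ZMod n)) (j : ZMod n) :
    parkCirc n (js ++ [j]) = parkCirc n js ++ [firstFreeCell (parkCirc n js) j] := by
  simp [parkCirc, firstFreeCell]

theorem length_parkCirc (js : List (ZMod n)) : (parkCirc n js).length = js.length := by
  induction js using List.reverseRecOn with
  | nil => rfl
  | append_singleton js j ih => simp [parkCirc_append_singleton, ih]

theorem parkCirc_map_add (a : ZMod n) (js : List (ZMod n)) :
    parkCirc n (js.map (a + ·)) = (parkCirc n js).map (a + ·) := by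
  induction js using List.reverseRecOn with
  | nil => rfl
  | append_singleton js j ih =>
    simp only [List.map_append, List.map_singleton, parkCirc_append_singleton, ih,
      firstFreeCell_map_add]

theorem vadd_mem_parkCirc_vadd_iff {r : ℕ} (a c : ZMod n) (j : Fin r → ZMod n) :
    a +ᵥ c ∈ parkCirc n (List.ofFn (a +ᵥ j)) ↔ c ∈ parkCirc n (List.ofFn j) := by
  have ofFn_vadd : List.ofFn (a +ᵥ j) = (List.ofFn j).map (a + ·) := by
    rw [List.map_ofFn]
    rfl
  rw [ofFn_vadd, parkCirc_map_add, vadd_eq_add, List.mem_map_of_injective (add_right_injective a)]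

theorem nodup_parkCirc {js : List (ZMod n)} (hjs : js.length ≤ n) : (parkCirc n js).Nodup := by
  induction js using List.reverseRecOn with
  | nil => exact List.nodup_nil
  | append_singleton js j ih =>
    have length_lt : js.length < n := by simpa using hjs
    have : NeZero n := ⟨length_lt.ne_bot⟩
    have exists_free : ∃ c, c ∉ parkCirc n js :=
      Cardinal.exists_notMem_of_length_lt _ (by simpa [length_parkCirc] using length_lt)
    rw [parkCirc_append_singleton, ← List.concat_eq_append]
    exact (ih length_lt.le).concat (firstFreeCell_notMem exists_free j)

theorem card_notMem_parkCirc [NeZero n] {js : List (ZMod n)} (hjs : js.length ≤ n) :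
    Nat.card {c // c ∉ parkCirc n js} = n - js.length := by
  rw [card_notMem_of_nodup (nodup_parkCirc hjs), Nat.card_zmod, length_parkCirc]

end Parking

/-- (Konheim–Weiss, Lemma 2) For `1 ≤ r ≤ n` and a fixed cell `c`, the number of preference
sequences `(j_1,…,j_r) ∈ (ℤ/n)^r` for which cell `c` remains unoccupied after the circular
parking procedure equals `n^(r-1) * (n - r)`. -/
theorem konheim_weiss_lemma2 (n r : ℕ) (hr1 : 1 ≤ r) (hrn : r ≤ n) (c : ZMod n) :
    Nat.card {j : Fin r → ZMod n // c ∉ parkCirc n (List.ofFn j)} =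
      n ^ (r - 1) * (n - r) := by
  have : NeZero n := ⟨by lia⟩
  have card_free (j : Fin r → ZMod n) : Nat.card {d // d ∉ parkCirc n (List.ofFn j)} = n - r := by
    rw [card_notMem_parkCirc (by simpa using hrn), List.length_ofFn]
  have rotate (a d : ZMod n) (j : Fin r → ZMod n) :
      a +ᵥ d ∉ parkCirc n (List.ofFn (a +ᵥ j)) ↔ d ∉ parkCirc n (List.ofFn j) :=
    (vadd_mem_parkCirc_vadd_iff a d j).not
  apply Nat.eq_of_mul_eq_mul_left (NeZero.pos n)
  calc n * Nat.card {j : Fin r → ZMod n // c ∉ parkCirc n (List.ofFn j)}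
      = n ^ r * (n - r) := by
        simpa using card_mul_card_related_of_isPretransitive rotate card_free c
    _ = n * (n ^ (r - 1) * (n - r)) := by rw [← mul_assoc, mul_pow_sub_one (by lia)]
end

section
/- (Konheim–Weiss, Theorem 2) For 1 ≤ k ≤ n define the real number E(n,k) = ((n−k)/(2·n^(k−1))) · Σ_{q=0}^{k−1} binomial(k−1,q)·(q+1)^q·q·(n−q−1)^(k−2−q), where (n−q−1)^(k−2−q) is a real power (the exponent k−2−q may equal −1 when q = k−1). Then for every μ ∈ (0,1), lim_{n→∞} E(n, ⌊μn⌋) = μ(2−μ)/(2(1−μ)^2). -/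
open Filter

/-- The explicit real-valued expression
`E(n,k) = ((n-k)/(2 n^(k-1))) Σ_{q=0}^{k-1} C(k-1,q) (q+1)^q q (n-q-1)^(k-2-q)`,
where `(n-q-1)^(k-2-q)` is a real power with (possibly negative) integer exponent. -/
noncomputable def E (n k : ℕ) : ℝ :=
  (((n : ℝ) - (k : ℝ)) / (2 * (n : ℝ) ^ (k - 1))) *
    ∑ q ∈ Finset.range k,
      (Nat.choose (k - 1) q : ℝ) * ((q : ℝ) + 1) ^ q * (q : ℝ) *
        ((n : ℝ) - (q : ℝ) - 1) ^ ((k : ℤ) - 2 - (q : ℤ))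

/-!
The factor `n - k` turns the powers `(n - q - 1)^(k - 2 - q)` into Abel polynomials in `n - k`, so
`E n k` is a combination of the sums `∑ q, C(m, q) (x + q)^(q + ε) A_(m - q)(y)` with `m = k - 1`,
`x = 1`, `y = n - k` and `ε = 0, 1`. For `ε = 0` this is Abel's binomial theorem: expanded in powers
of `s = x + y + m`, the coefficient of `s^(m - N)` with `N > 0` is a multiple of the `N`-th
difference of a polynomial of degree `N - 1`, hence zero. The case `ε = 1` reduces to it by
the recursion `q C(m, q) = m C(m - 1, q - 1)`. The result is `E n k = (Q n (k - 1) - 1) / 2` with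
`Q n m = ∑ j, (j + 1) m (m - 1) ⋯ (m - j + 1) / n^j`, whose terms converge to `(j + 1) μ^j` as
`m / n → μ` and are dominated by `(j + 1) ρ^j` for any `ρ` strictly between `μ` and `1`.
-/

open Finset hiding antidiagonal mem_antidiagonal
open HasAntidiagonal Polynomial Topology

section CommSemiring

variable {R : Type*} [CommSemiring R]

lemma sum_antidiagonal_choose_mul_add_pow (s : R) (w u : ℕ → R) (m : ℕ) :
    ∑ p ∈ antidiagonal m, m.choose p.1 * (s + w p.2) ^ p.1 * u p.2 =
      ∑ p ∈ antidiagonal m, m.choose p.1 * s ^ p.1 *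
        ∑ r ∈ antidiagonal p.2, p.2.choose r.1 * w r.2 ^ r.1 * u r.2 := by
  simp only [(Commute.all s _).add_pow', mul_sum, sum_mul, sum_sigma']
  refine sum_nbij' (fun t ↦ ⟨(t.2.1, t.2.2 + t.1.2), (t.2.2, t.1.2)⟩)
    (fun t ↦ ⟨(t.1.1 + t.2.1, t.2.2), (t.1.1, t.2.1)⟩) ?_ ?_ ?_ ?_ ?_
  all_goals
    rintro ⟨⟨a, b⟩, c, d⟩ h
    simp only [mem_sigma, mem_antidiagonal] at h ⊢
    obtain ⟨rfl, rfl⟩ := h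
  · simp [add_assoc]
  · simp [add_assoc]
  · rfl
  · rfl
  · have trinomial : ((c + d + b).choose (c + d) * (c + d).choose c : R) =
        (c + d + b).choose c * (d + b).choose d := by
      have := Nat.choose_mul (n := c + d + b) (Nat.le_add_right c d)
      rw [add_assoc, Nat.add_sub_cancel_left, Nat.add_sub_cancel_left] at this
      simpa only [add_assoc] using mod_cast congrArg (Nat.cast : ℕ → R) this
    calc
      _ = ((c + d + b).choose (c + d) * (c + d).choose c : R) * (s ^ c * w b ^ d * u b) := by
        rw [nsmul_eq_mul]
        ring
      _ = _ := by
        rw [trinomial]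
        ring

lemma sum_antidiagonal_choose_mul_fst_mul (f : ℕ × ℕ → R) (m : ℕ) :
    ∑ p ∈ antidiagonal (m + 1), (m + 1).choose p.1 * p.1 * f p =
      (m + 1) * ∑ p ∈ antidiagonal m, m.choose p.1 * f (p.1 + 1, p.2) := by
  have absorb (q : ℕ) : ((m + 1).choose (q + 1) * (q + 1 : ℕ) : R) = (m + 1) * m.choose q :=
    mod_cast congrArg (Nat.cast : ℕ → R) (Nat.add_one_mul_choose_eq m q).symm
  simp only [Nat.sum_antidiagonal_succ, absorb, Nat.cast_zero, mul_zero, zero_mul, zero_add]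
  simp only [mul_sum, mul_assoc]

/-- The Abel polynomial `y (y + a j)^(j - 1)` of degree `j`, usually written `A_j(y; -a)`; these are
the coefficients in Abel's generalization of the binomial theorem. The exponent is `-1` for `j = 0`,
where the value is `y * y⁻¹ = 1`. -/
def abelPoly (a y : R) : ℕ → R
  | 0 => 1
  | j + 1 => y * (y + a * (j + 1)) ^ j

lemma pow_mul_abelPoly (a y : R) {i j m : ℕ} (h : i + j = m + 1) :
    (y + a * j) ^ i * abelPoly a y j = y * (y + a * j) ^ m := by
  cases j with
  | zero => simp_all [abelPoly, pow_succ']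
  | succ j =>
    obtain rfl : m = i + j := by lia
    simp only [abelPoly, pow_add]
    push_cast
    ring

lemma mul_zpow_eq_abelPoly {K : Type*} [Semifield K] (a : K) {y : K} (hy : y ≠ 0) (j : ℕ) :
    y * (y + a * j) ^ ((j : ℤ) - 1) = abelPoly a y j := by
  cases j <;> simp [abelPoly, hy]

end CommSemiring

section CommRing

variable {R : Type*} [CommRing R]

lemma sum_antidiagonal_choose_mul_neg_one_pow_mul_eval {P : R[X]} {m : ℕ} (hP : P.natDegree < m) :
    ∑ p ∈ antidiagonal m, m.choose p.1 * (-1) ^ p.1 * P.eval (p.2 : R) = 0 := by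
  have h := congrFun (fwdDiff_iter_eq_zero_of_degree_lt hP) 0
  rw [fwdDiff_iter_eq_sum_shift, ← Nat.sum_antidiagonal_eq_sum_range_succ
    (fun i j ↦ ((-1 : ℤ) ^ j * m.choose i) • P.eval (0 + i • (1 : R))),
    ← Nat.sum_antidiagonal_swap] at h
  refine Eq.trans (sum_congr rfl fun p hp ↦ ?_) h
  rw [Prod.fst_swap, Prod.snd_swap, Nat.choose_symm_of_eq_add (mem_antidiagonal.mp hp).symm]
  simp [mul_comm ((-1 : R) ^ _)]

variable (a y : R)

lemma sum_antidiagonal_choose_mul_neg_pow_mul_abelPoly (m : ℕ) :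
    ∑ p ∈ antidiagonal m, m.choose p.1 * (-(y + a * p.2)) ^ p.1 * abelPoly a y p.2 =
      if m = 0 then 1 else 0 := by
  cases m with
  | zero => simp [abelPoly]
  | succ m =>
    have hdeg : ((C y + C a * X) ^ m : R[X]).natDegree < m + 1 :=
      Nat.lt_succ_of_le (by compute_degree)
    rw [if_neg m.succ_ne_zero, ← mul_zero y,
      ← sum_antidiagonal_choose_mul_neg_one_pow_mul_eval hdeg, mul_sum]
    refine sum_congr rfl fun p hp ↦ ?_
    rw [neg_pow]
    simp only [eval_pow, eval_add, eval_mul, eval_C, eval_X]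
    linear_combination (m + 1).choose p.1 * (-1) ^ p.1 *
      pow_mul_abelPoly a y (mem_antidiagonal.mp hp)

/-- **Abel's binomial theorem**. -/
theorem sum_antidiagonal_choose_mul_pow_mul_abelPoly (x : R) (m : ℕ) :
    ∑ p ∈ antidiagonal m, m.choose p.1 * (x + a * p.1) ^ p.1 * abelPoly a y p.2 =
      (x + y + a * m) ^ m := by
  have shift : ∀ p ∈ antidiagonal m, x + a * p.1 = x + y + a * m + -(y + a * p.2) := by
    intro p hp
    rw [← mem_antidiagonal.mp hp]
    push_cast
    ring
  rw [sum_congr rfl fun p hp ↦ by rw [shift p hp],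
    sum_antidiagonal_choose_mul_add_pow (x + y + a * m) (fun j ↦ -(y + a * j)) (abelPoly a y)]
  simp only [sum_antidiagonal_choose_mul_neg_pow_mul_abelPoly]
  rw [sum_eq_single_of_mem (m, 0) (by simp)]
  · simp
  · intro p hp hne
    rw [if_neg fun h ↦ hne ((antidiagonal_congr' hp (by simp)).mpr h), mul_zero]

theorem sum_antidiagonal_choose_mul_pow_succ_mul_abelPoly (x : R) (m : ℕ) :
    ∑ p ∈ antidiagonal m, m.choose p.1 * (x + a * p.1) ^ (p.1 + 1) * abelPoly a y p.2 =
      ∑ j ∈ range (m + 1), m.descFactorial j * a ^ j * (x + a * j) * (x + y + a * m) ^ (m - j) := by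
  induction m generalizing x with
  | zero => simp [abelPoly]
  | succ m ih =>
    calc
      _ = x * ∑ p ∈ antidiagonal (m + 1),
              (m + 1).choose p.1 * (x + a * p.1) ^ p.1 * abelPoly a y p.2 +
            a * ∑ p ∈ antidiagonal (m + 1),
              (m + 1).choose p.1 * p.1 * ((x + a * p.1) ^ p.1 * abelPoly a y p.2) := by
        rw [mul_sum, mul_sum, ← sum_add_distrib]
        exact sum_congr rfl fun p _ ↦ by ring
      _ = x * (x + y + a * (m + 1)) ^ (m + 1) + a * ((m + 1) * ∑ p ∈ antidiagonal m,
              m.choose p.1 * (x + a + a * p.1) ^ (p.1 + 1) * abelPoly a y p.2) := by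
        rw [sum_antidiagonal_choose_mul_pow_mul_abelPoly,
          sum_antidiagonal_choose_mul_fst_mul]
        push_cast
        congr! 4
        ring
      _ = _ := by
        rw [ih, sum_range_succ' _ (m + 1), add_comm, mul_sum, mul_sum]
        congr 1
        · refine sum_congr rfl fun j _ ↦ ?_
          rw [Nat.succ_descFactorial_succ, Nat.add_sub_add_right]
          push_cast
          ring
        · simp

end CommRing

/-- Knuth's function `Q_r(x, m) = ∑ j, C(j + r, r) m (m - 1) ⋯ (m - j + 1) / x^j`, in terms of which
the cost of linear probing is expressed; the sum stops at `j = m`, after which all terms vanish. -/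
noncomputable def knuthQ (r : ℕ) (x : ℝ) (m : ℕ) : ℝ :=
  ∑ j ∈ range (m + 1), (j + r).choose r * (m.descFactorial j / x ^ j)

lemma knuthQ_eq_tsum (r : ℕ) (x : ℝ) (m : ℕ) :
    knuthQ r x m = ∑' j : ℕ, (j + r).choose r * (m.descFactorial j / x ^ j) := by
  refine (tsum_eq_sum fun j hj ↦ ?_).symm
  rw [Nat.descFactorial_of_lt (by simpa using hj)]
  simp

section Limits

variable {ι : Type*} {l : Filter ι} {x : ι → ℝ} {m : ι → ℕ} {μ : ℝ}

lemma tendsto_descFactorial_div_pow (hx : Tendsto x l atTop)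
    (hm : Tendsto (fun i ↦ m i / x i) l (𝓝 μ)) (j : ℕ) :
    Tendsto (fun i ↦ (m i).descFactorial j / x i ^ j) l (𝓝 (μ ^ j)) := by
  induction j with
  | zero => simp [tendsto_const_nhds]
  | succ j ih =>
    have factor : Tendsto (fun i ↦ (m i - j : ℝ) / x i) l (𝓝 μ) := by
      simpa only [sub_div, sub_zero] using hm.sub (hx.const_div_atTop (j : ℝ))
    refine (pow_succ μ j ▸ ih.mul factor).congr fun i ↦ ?_
    rw [← descPochhammer_eval_eq_descFactorial, ← descPochhammer_eval_eq_descFactorial,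
      descPochhammer_succ_eval, pow_succ, mul_div_mul_comm]

lemma tendsto_knuthQ (r : ℕ) (hμ : μ < 1) (hx : Tendsto x l atTop)
    (hm : Tendsto (fun i ↦ m i / x i) l (𝓝 μ)) :
    Tendsto (fun i ↦ knuthQ r (x i) (m i)) l (𝓝 (1 / (1 - μ) ^ (r + 1))) := by
  obtain rfl | _ := l.eq_or_neBot
  · exact tendsto_bot
  have hx_pos : ∀ᶠ i in l, 0 < x i := hx.eventually_gt_atTop 0
  have hμ0 : 0 ≤ μ := ge_of_tendsto hm (hx_pos.mono fun i hi ↦ by positivity)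
  obtain ⟨ρ, hμρ, hρ⟩ := exists_between hμ
  have norm_lt_one {t : ℝ} (h0 : 0 ≤ t) (h1 : t < 1) : ‖t‖ < 1 := by
    rwa [Real.norm_of_nonneg h0]
  rw [← tsum_choose_mul_geometric_of_norm_lt_one r (norm_lt_one hμ0 hμ)]
  simp only [knuthQ_eq_tsum]
  refine tendsto_tsum_of_dominated_convergence
    (summable_choose_mul_geometric_of_norm_lt_one r (norm_lt_one (hμ0.trans hμρ.le) hρ))
    (fun j ↦ (tendsto_descFactorial_div_pow hx hm j).const_mul _) ?_
  filter_upwards [hx_pos, hm.eventually_le_const hμρ] with i hxi hi j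
  rw [Real.norm_of_nonneg (by positivity)]
  gcongr
  calc
    ((m i).descFactorial j / x i ^ j : ℝ) ≤ m i ^ j / x i ^ j := by
      gcongr
      exact_mod_cast Nat.descFactorial_le_pow _ _
    _ = (m i / x i) ^ j := (div_pow _ _ _).symm
    _ ≤ ρ ^ j := by gcongr

end Limits

lemma sum_antidiagonal_choose_mul_abelPoly_eq_knuthQ {x : ℝ} (hx : x ≠ 0) (m : ℕ) :
    ∑ p ∈ antidiagonal m,
        m.choose p.1 * (p.1 + 1 : ℝ) ^ p.1 * p.1 * abelPoly 1 (x - (m + 1)) p.2 =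
      x ^ m * (knuthQ 1 x m - 1) := by
  have hx_eq : 1 + (x - (m + 1)) + 1 * m = x := by ring
  calc
    _ = ∑ p ∈ antidiagonal m,
          m.choose p.1 * (1 + 1 * p.1 : ℝ) ^ (p.1 + 1) * abelPoly 1 (x - (m + 1)) p.2 -
        ∑ p ∈ antidiagonal m,
          m.choose p.1 * (1 + 1 * p.1 : ℝ) ^ p.1 * abelPoly 1 (x - (m + 1)) p.2 := by
      rw [← sum_sub_distrib]
      exact sum_congr rfl fun p _ ↦ by ring
    _ = ∑ j ∈ range (m + 1), m.descFactorial j * 1 ^ j * (1 + 1 * j) * x ^ (m - j) - x ^ m := by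
      rw [sum_antidiagonal_choose_mul_pow_succ_mul_abelPoly,
        sum_antidiagonal_choose_mul_pow_mul_abelPoly, hx_eq]
    _ = x ^ m * (knuthQ 1 x m - 1) := by
      rw [knuthQ, mul_sub_one, mul_sum]
      congr 1
      refine sum_congr rfl fun j hj ↦ ?_
      rw [pow_sub₀ x hx (mem_range_succ_iff.mp hj), Nat.choose_one_right]
      push_cast
      ring

lemma E_succ_eq_knuthQ {n m : ℕ} (h : m + 1 < n) :
    E n (m + 1) = (knuthQ 1 n m - 1) / 2 := by
  have hn : (n : ℝ) ≠ 0 := by exact_mod_cast (by lia : n ≠ 0)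
  have hy : (n - (m + 1) : ℝ) ≠ 0 := sub_ne_zero.mpr (mod_cast h.ne')
  have abel_term : ∀ p ∈ antidiagonal m,
      (n - (m + 1) : ℝ) * (n - p.1 - 1 : ℝ) ^ (((m + 1 : ℕ) : ℤ) - 2 - p.1) =
        abelPoly 1 (n - (m + 1) : ℝ) p.2 := by
    intro p hp
    obtain rfl := mem_antidiagonal.mp hp
    rw [← mul_zpow_eq_abelPoly 1 hy]
    push_cast
    ring_nf
  have key : (n - (m + 1) : ℝ) * ∑ q ∈ range (m + 1), m.choose q * (q + 1 : ℝ) ^ q * q *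
      (n - q - 1 : ℝ) ^ (((m + 1 : ℕ) : ℤ) - 2 - q) = n ^ m * (knuthQ 1 n m - 1) := by
    rw [← sum_antidiagonal_choose_mul_abelPoly_eq_knuthQ hn,
      ← Nat.sum_antidiagonal_eq_sum_range_succ_mk
      (fun p ↦ m.choose p.1 * (p.1 + 1 : ℝ) ^ p.1 * p.1 *
        (n - p.1 - 1 : ℝ) ^ (((m + 1 : ℕ) : ℤ) - 2 - p.1)), mul_sum]
    exact sum_congr rfl fun p hp ↦ by rw [← abel_term p hp]; ring
  rw [E, Nat.add_sub_cancel, div_mul_eq_mul_div, Nat.cast_add_one, key]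
  field_simp

theorem konheim_weiss_theorem2_general {ι : Type*} {l : Filter ι} {n k : ι → ℕ} {μ : ℝ}
    (hμ : μ < 1) (hn : Tendsto n l atTop) (hk : ∀ᶠ i in l, 1 ≤ k i)
    (hkn : Tendsto (fun i ↦ (k i : ℝ) / n i) l (𝓝 μ)) :
    Tendsto (fun i ↦ E (n i) (k i)) l (𝓝 (μ * (2 - μ) / (2 * (1 - μ) ^ 2))) := by
  have hn_real : Tendsto (fun i ↦ (n i : ℝ)) l atTop := tendsto_natCast_atTop_atTop.comp hn
  have hpred : Tendsto (fun i ↦ ((k i - 1 : ℕ) : ℝ) / n i) l (𝓝 μ) := by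
    have h := hkn.sub (hn_real.const_div_atTop 1)
    rw [sub_zero] at h
    refine h.congr' ?_
    filter_upwards [hk] with i hki
    rw [Nat.cast_pred hki, sub_div]
  have hlim : (1 / (1 - μ) ^ (1 + 1) - 1) / 2 = μ * (2 - μ) / (2 * (1 - μ) ^ 2) := by
    have : 1 - μ ≠ 0 := (sub_pos.mpr hμ).ne'
    field_simp
    ring
  rw [← hlim]
  refine (((tendsto_knuthQ 1 hμ hn_real hpred).sub_const 1).div_const 2).congr' ?_
  filter_upwards [hk, hn.eventually_gt_atTop 0, hkn.eventually_lt_const hμ] with i hki hni hlt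
  have hkn_lt : k i < n i := by
    rw [div_lt_one (mod_cast hni)] at hlt
    exact_mod_cast hlt
  obtain ⟨m, hm⟩ := Nat.exists_eq_add_of_le' hki
  rw [hm, E_succ_eq_knuthQ (hm ▸ hkn_lt), Nat.add_sub_cancel]

/-- (Konheim–Weiss, Theorem 2) For every `μ ∈ (0,1)`,
`lim_{n→∞} E(n, ⌊μn⌋) = μ(2-μ)/(2(1-μ)^2)`. -/
theorem konheim_weiss_theorem2 (μ : ℝ) (h0 : 0 < μ) (h1 : μ < 1) :
    Tendsto (fun n : ℕ => E n ⌊μ * (n : ℝ)⌋₊) atTop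
      (nhds (μ * (2 - μ) / (2 * (1 - μ) ^ 2))) :=
  konheim_weiss_theorem2_general h1 tendsto_id
    ((tendsto_nat_floor_mul_atTop μ h0).eventually_ge_atTop 1)
    ((tendsto_nat_floor_mul_div_atTop h0.le).comp tendsto_natCast_atTop_atTop)
end

section
/- (Konheim–Weiss) For integers 1 ≤ c ≤ p, the number of sequences s ∈ {1,…,p}^c that are parking functions for the one-way street with p spots equals (p+1)^(c−1)·(p+1−c). Equivalently, the probability P(c,p) that c cars with independent uniformly random preferences on {1,…,p} all park equals (1 + 1/p)^c · (1 − c/(p+1)). -/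
/-- `s : Fin c → Fin p` (preferences of `c` cars among `p` spots, 0-indexed) is a parking
function for the one-way street with `p` spots iff for every spot `j`,
`#{k : s k ≥ j} ≤ p - j` (this is `#{k : s_k ≥ j} ≤ n - j + 1` in 1-indexed notation). -/
def IsStreetParking (p c : ℕ) (s : Fin c → Fin p) : Prop :=
  ∀ j : Fin p, (Finset.univ.filter fun k : Fin c => j ≤ s k).card ≤ p - (j : ℕ)

/-!
Following Pollak, close the street into a circle by adding one spot, indexed by `p`. A preference
function on the street is a parking function exactly when, on the circle, that extra spot stays
vacant. By the cycle lemma every preference function of `c ≤ n` cars on a circle of `n` spots leaves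
exactly `n - c` of them vacant, and by rotational symmetry each spot is vacant equally often; hence
the number `N` of preference functions leaving the extra spot vacant satisfies
`(p + 1) * N = (p + 1) ^ c * (p + 1 - c)`.

The cycle lemma concerns a walk which climbs by at most one per step and gains `d ≥ 0` over each
period: such a walk sets exactly `d` new records per period, because its running maximum increases
by exactly one at each record and, like the walk, gains `d` per period.
-/

namespace StreetParking

open Finset

section Records

theorem partialSups_lt_iff {ι α : Type*} [Preorder ι] [LocallyFiniteOrderBot ι] [LinearOrder α]
    {f : ι → α} {i : ι} {a : α} : partialSups f i < a ↔ ∀ j ≤ i, f j < a :=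
  partialSups_iff_forall (· < a) sup_lt_iff

theorem partialSups_add_period {α : Type*} [AddCommGroup α] [SemilatticeSup α]
    [IsOrderedAddMonoid α] {S : ℕ → α} {n : ℕ} {d : α} (hd : 0 ≤ d)
    (hS : ∀ t, S (t + n) = S t + d) {t : ℕ} (ht : n ≤ t + 1) :
    partialSups S (t + n) = partialSups S t + d := by
  apply le_antisymm
  · refine partialSups_le _ _ _ fun u hu ↦ ?_
    rcases lt_or_ge u n with hun | hnu
    · exact (le_partialSups_of_le S (by lia)).trans (le_add_of_nonneg_right hd)
    · obtain ⟨v, rfl⟩ := Nat.exists_eq_add_of_le' hnu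
      rw [hS]
      gcongr
      exact le_partialSups_of_le S (by lia)
  · rw [← le_sub_iff_add_le]
    refine partialSups_le _ _ _ fun u hu ↦ ?_
    rw [le_sub_iff_add_le, ← hS]
    exact le_partialSups_of_le S (by lia)

theorem card_filter_partialSups_lt {S : ℕ → ℤ} (hS : ∀ t, S (t + 1) ≤ S t + 1) {a b : ℕ}
    (hab : a ≤ b) :
    (#{t ∈ Ico a b | partialSups S t < S (t + 1)} : ℤ) = partialSups S b - partialSups S a := by
  rw [natCast_card_filter, ← sum_Ico_sub _ hab]
  refine sum_congr rfl fun t _ ↦ ?_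
  have hle : S (t + 1) ≤ partialSups S t + 1 :=
    (hS t).trans (add_le_add_left (le_partialSups S t) 1)
  rw [partialSups_add_one]
  split_ifs with hlt
  · rw [sup_eq_right.2 hlt.le]
    lia
  · rw [sup_eq_left.2 (not_lt.1 hlt), sub_self]

end Records

section CycleLemma

variable {n : ℕ}

/-- The sum of the `l` cyclically consecutive entries `x (r - (l - 1)), …, x (r - 1), x r` ending
at position `r`; the arc may wrap around the cycle several times. -/
def arcSum (x : ZMod n → ℤ) (r : ZMod n) (l : ℕ) : ℤ :=
  ∑ i ∈ range l, x (r - i)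

/-- The height after `t` steps of the walk on `ℤ` which starts at height `0` and whose steps go
repeatedly around the cycle `x 0, x 1, …`. -/
def cyclicWalk (x : ZMod n → ℤ) (t : ℕ) : ℤ :=
  ∑ u ∈ range t, x u

variable (x : ZMod n → ℤ)

theorem cyclicWalk_add_one (t : ℕ) : cyclicWalk x (t + 1) = cyclicWalk x t + x t :=
  sum_range_succ _ t

theorem cyclicWalk_add_arcSum (u l : ℕ) :
    cyclicWalk x u + arcSum x (u + l : ℕ) (l + 1) = cyclicWalk x (u + l + 1) := by
  rw [cyclicWalk, cyclicWalk, arcSum, add_assoc, sum_range_add _ u, add_right_inj,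
    ← sum_range_reflect]
  refine sum_congr rfl fun i hi ↦ ?_
  have hil : i ≤ l := by simpa [Nat.lt_succ_iff] using hi
  rw [Nat.add_sub_cancel, ← Nat.cast_sub (by lia)]
  congr 2
  lia

theorem partialSups_cyclicWalk_lt_iff (t : ℕ) :
    partialSups (cyclicWalk x) t < cyclicWalk x (t + 1) ↔ ∀ l ≤ t, 0 < arcSum x t (l + 1) := by
  have lt_iff_of_add_eq {u l : ℕ} (h : u + l = t) :
      cyclicWalk x u < cyclicWalk x (t + 1) ↔ 0 < arcSum x t (l + 1) := by
    subst h
    rw [← cyclicWalk_add_arcSum, lt_add_iff_pos_right]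
  rw [partialSups_lt_iff]
  exact ⟨fun h l hl ↦ (lt_iff_of_add_eq (Nat.sub_add_cancel hl)).1 (h _ (Nat.sub_le t l)),
    fun h u hu ↦ (lt_iff_of_add_eq (Nat.add_sub_cancel' hu)).2 (h _ (Nat.sub_le t u))⟩

variable [NeZero n]

theorem sum_Ico_natCast_zmod {M : Type*} [AddCommMonoid M] (f : ZMod n → M) (a : ℕ) :
    ∑ t ∈ Ico a (a + n), f t = ∑ i, f i := by
  rw [sum_Ico_eq_sum_range, Nat.add_sub_cancel_left,
    ← Equiv.sum_comp (Equiv.addLeft (a : ZMod n)) f]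
  refine sum_bij' (fun u _ ↦ (u : ZMod n)) (fun i _ ↦ i.val) (by simp) ?_ ?_ (by simp) (by simp)
  · exact fun i _ ↦ mem_range.2 i.val_lt
  · exact fun u hu ↦ ZMod.val_natCast_of_lt (mem_range.1 hu)

theorem cyclicWalk_add_period (t : ℕ) : cyclicWalk x (t + n) = cyclicWalk x t + ∑ i, x i := by
  rw [cyclicWalk, cyclicWalk, ← sum_Ico_natCast_zmod x t]
  exact (sum_range_add_sum_Ico _ (Nat.le_add_right t n)).symm

theorem arcSum_add_period (r : ZMod n) (l : ℕ) : arcSum x r (l + n) = arcSum x r l + ∑ i, x i := by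
  rw [arcSum, arcSum, ← Equiv.sum_comp (Equiv.subLeft r) x,
    ← sum_Ico_natCast_zmod (fun i ↦ x (Equiv.subLeft r i)) l]
  exact (sum_range_add_sum_Ico _ (Nat.le_add_right l n)).symm

variable {x}

theorem arcSum_pos_of_forall_lt (hsum : 0 ≤ ∑ i, x i) {r : ZMod n}
    (h : ∀ l < n, 0 < arcSum x r (l + 1)) (l : ℕ) : 0 < arcSum x r (l + 1) := by
  induction l using Nat.strong_induction_on with
  | h l ih =>
    rcases lt_or_ge l n with hln | hnl
    · exact h l hln
    · obtain ⟨m, rfl⟩ := Nat.exists_eq_add_of_le' hnl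
      rw [add_right_comm, arcSum_add_period]
      exact add_pos_of_pos_of_nonneg (ih m (Nat.lt_add_of_pos_right (NeZero.pos n))) hsum

/-- The cycle lemma of Dvoretzky and Motzkin. -/
theorem card_filter_forall_arcSum_pos (hx : ∀ i, x i ≤ 1) (hsum : 0 ≤ ∑ i, x i) :
    (#{r | ∀ l < n, 0 < arcSum x r (l + 1)} : ℤ) = ∑ i, x i := by
  have record_iff (t : ℕ) (ht : t ∈ Ico n (n + n)) : (∀ l < n, 0 < arcSum x t (l + 1)) ↔
      partialSups (cyclicWalk x) t < cyclicWalk x (t + 1) := by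
    rw [partialSups_cyclicWalk_lt_iff]
    exact ⟨fun h l _ ↦ arcSum_pos_of_forall_lt hsum h l,
      fun h l hl ↦ h l (hl.le.trans (mem_Ico.1 ht).1)⟩
  have step_le (t : ℕ) : cyclicWalk x (t + 1) ≤ cyclicWalk x t + 1 :=
    (cyclicWalk_add_one x t).trans_le (by gcongr; exact hx t)
  calc (#{r | ∀ l < n, 0 < arcSum x r (l + 1)} : ℤ)
      = #{t ∈ Ico n (n + n) | ∀ l < n, 0 < arcSum x (t : ℕ) (l + 1)} := by
        rw [card_filter, card_filter, sum_Ico_natCast_zmod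
          (fun r ↦ if ∀ l < n, 0 < arcSum x r (l + 1) then 1 else 0)]
    _ = #{t ∈ Ico n (n + n) | partialSups (cyclicWalk x) t < cyclicWalk x (t + 1)} := by
        rw [filter_congr record_iff]
    _ = partialSups (cyclicWalk x) (n + n) - partialSups (cyclicWalk x) n :=
        card_filter_partialSups_lt step_le (Nat.le_add_right n n)
    _ = ∑ i, x i := by
        rw [partialSups_add_period hsum (cyclicWalk_add_period x) n.le_succ, add_sub_cancel_left]

end CycleLemma

section CircularParking

variable {n : ℕ} {ι : Type*} [Fintype ι]

/-- On a circular street with `n` spots, spot `r` stays vacant after cars with preferences `s` have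
parked, driving forward. The parking process is not modelled: vacancy is expressed by the condition
that, for each `l < n`, at most `l` cars prefer one of the `l + 1` spots of the arc ending
at `r`. -/
def IsVacant (s : ι → ZMod n) (r : ZMod n) : Prop :=
  ∀ l < n, #{k | (r - s k).val ≤ l} ≤ l

instance (s : ι → ZMod n) : DecidablePred (IsVacant s) :=
  fun _ ↦ inferInstanceAs (Decidable (∀ l < n, _))

theorem isVacant_add_right_iff {s : ι → ZMod n} {r : ZMod n} (a : ZMod n) :
    IsVacant (fun k ↦ s k + a) (r + a) ↔ IsVacant s r := by
  simp only [IsVacant, add_sub_add_right_eq_sub]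

variable [NeZero n]

theorem IsVacant.apply_ne {s : ι → ZMod n} {r : ZMod n} (h : IsVacant s r) (k : ι) : s k ≠ r := by
  rintro rfl
  have hempty := h 0 (NeZero.pos n)
  rw [Nat.le_zero, card_eq_zero, filter_eq_empty_iff] at hempty
  exact hempty (mem_univ k) (by simp)

theorem card_filter_val_sub_le (s : ι → ZMod n) (r : ZMod n) {l : ℕ} (hl : l < n) :
    #{k | (r - s k).val ≤ l} = ∑ i ∈ range (l + 1), #{k | s k = r - i} := by
  rw [card_eq_sum_card_fiberwise (f := fun k ↦ (r - s k).val) (t := range (l + 1))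
    (fun k hk ↦ by simpa [Nat.lt_succ_iff] using hk)]
  refine sum_congr rfl fun i hi ↦ ?_
  have hil : i ≤ l := Nat.lt_succ_iff.1 (mem_range.1 hi)
  rw [filter_filter]
  congr 1 with k
  have val_eq_iff : (r - s k).val = i ↔ s k = r - i := by
    rw [(ZMod.val_injective n).eq_iff' (ZMod.val_natCast_of_lt (hil.trans_lt hl)),
      sub_eq_iff_eq_add', eq_sub_iff_add_eq, eq_comm]
  simp only [mem_filter_univ, ← val_eq_iff]
  lia

theorem isVacant_iff_arcSum_pos {s : ι → ZMod n} {r : ZMod n} :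
    IsVacant s r ↔ ∀ l < n, 0 < arcSum (fun i ↦ 1 - (#{k | s k = i} : ℤ)) r (l + 1) := by
  refine forall₂_congr fun l hl ↦ ?_
  rw [card_filter_val_sub_le s r hl, arcSum, sum_sub_distrib, ← Nat.cast_sum]
  simp only [sum_const, card_range, nsmul_one]
  lia

theorem card_vacant_spots (s : ι → ZMod n) (h : Fintype.card ι ≤ n) :
    #{r | IsVacant s r} = n - Fintype.card ι := by
  have sum_steps : ∑ i, (1 - (#{k | s k = i} : ℤ)) = n - Fintype.card ι := by
    rw [sum_sub_distrib, ← Nat.cast_sum,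
      ← card_eq_sum_card_fiberwise (f := s) (fun k _ ↦ by simp)]
    simp [ZMod.card]
  have count := card_filter_forall_arcSum_pos (x := fun i ↦ 1 - (#{k | s k = i} : ℤ))
    (by simp) (by lia)
  simp only [← isVacant_iff_arcSum_pos, sum_steps] at count
  lia

theorem card_filter_isVacant_eq [DecidableEq ι] (r r' : ZMod n) :
    #{s : ι → ZMod n | IsVacant s r} = #{s : ι → ZMod n | IsVacant s r'} := by
  refine card_equiv (Equiv.addRight fun _ ↦ r' - r) fun s ↦ ?_
  rw [mem_filter_univ, mem_filter_univ, ← isVacant_add_right_iff (r' - r), add_sub_cancel]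
  rfl

theorem mul_card_filter_isVacant [DecidableEq ι] (h : Fintype.card ι ≤ n) (r : ZMod n) :
    n * #{s : ι → ZMod n | IsVacant s r} = n ^ Fintype.card ι * (n - Fintype.card ι) :=
  calc n * #{s : ι → ZMod n | IsVacant s r}
      = ∑ r', #{s : ι → ZMod n | IsVacant s r'} := by
        simp [fun r' ↦ card_filter_isVacant_eq (ι := ι) r' r, ZMod.card]
    _ = ∑ s : ι → ZMod n, #{r' | IsVacant s r'} :=
        (sum_card_bipartiteAbove_eq_sum_card_bipartiteBelow IsVacant).symm
    _ = n ^ Fintype.card ι * (n - Fintype.card ι) := by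
        simp [card_vacant_spots _ h, ZMod.card]

end CircularParking

section Street

variable {p c : ℕ}

theorem isVacant_natCast_iff {s : Fin c → Fin p} :
    IsVacant (fun k ↦ ((s k : ℕ) : ZMod (p + 1))) (p : ZMod (p + 1)) ↔ IsStreetParking p c s := by
  have val_sub (k : Fin c) : ((p : ZMod (p + 1)) - ((s k : ℕ) : ZMod (p + 1))).val = p - s k := by
    rw [← Nat.cast_sub (s k).is_lt.le, ZMod.val_natCast_of_lt (by lia)]
  simp only [IsVacant, IsStreetParking, val_sub]
  constructor
  · intro h j
    convert h (p - j) (by lia) using 5 with k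
    lia
  · intro h l hl
    rcases Nat.eq_zero_or_pos l with rfl | hl0
    · rw [Nat.le_zero, card_eq_zero, filter_eq_empty_iff]
      lia
    · convert h ⟨p - l, by lia⟩ using 4 with k
      · rw [Fin.le_def]
        lia
      · simp only
        lia

theorem card_isStreetParking_eq_card_isVacant :
    Nat.card {s : Fin c → Fin p // IsStreetParking p c s} =
      #{s : Fin c → ZMod (p + 1) | IsVacant s (p : ZMod (p + 1))} := by
  rw [← Nat.subtype_card _ fun s ↦ mem_filter_univ s]
  refine Nat.card_eq_of_bijective
    (Subtype.map (fun s k ↦ ((s k : ℕ) : ZMod (p + 1))) fun s ↦ isVacant_natCast_iff.2) ⟨?_, ?_⟩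
  · refine Subtype.map_injective _ fun s s' h ↦ funext fun k ↦ Fin.ext ?_
    exact CharP.natCast_injOn_Iio (ZMod (p + 1)) (p + 1) (Nat.lt_succ_of_lt (s k).is_lt)
      (Nat.lt_succ_of_lt (s' k).is_lt) (congrFun h k)
  · rintro ⟨s, hs⟩
    have val_lt (k : Fin c) : (s k).val < p := by
      refine (Nat.lt_succ_iff.1 (s k).val_lt).lt_of_ne fun h ↦ hs.apply_ne k ?_
      exact (ZMod.natCast_zmod_val (s k)).symm.trans (congrArg Nat.cast h)
    refine ⟨⟨fun k ↦ ⟨(s k).val, val_lt k⟩, isVacant_natCast_iff.1 ?_⟩, Subtype.ext ?_⟩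
    · simpa using hs
    · simp [Subtype.map]

theorem mul_card_isStreetParking (h : c ≤ p + 1) :
    (p + 1) * Nat.card {s : Fin c → Fin p // IsStreetParking p c s} =
      (p + 1) ^ c * (p + 1 - c) := by
  simpa [card_isStreetParking_eq_card_isVacant] using
    mul_card_filter_isVacant (n := p + 1) (ι := Fin c) (by simpa using h) (p : ZMod (p + 1))

end Street

end StreetParking

/-- (Konheim–Weiss) For `1 ≤ c ≤ p`, the number of parking functions for `c` cars on the
one-way street with `p` spots is `(p+1)^(c-1) * (p+1-c)`; equivalently, the probability that
`c` cars with independent uniform preferences all park is `(1 + 1/p)^c * (1 - c/(p+1))`. -/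
theorem konheim_weiss_street_count (p c : ℕ) (hc : 1 ≤ c) (hcp : c ≤ p) :
    Nat.card {s : Fin c → Fin p // IsStreetParking p c s} = (p + 1) ^ (c - 1) * (p + 1 - c) ∧
    (Nat.card {s : Fin c → Fin p // IsStreetParking p c s} : ℝ) / (p : ℝ) ^ c =
      (1 + 1 / (p : ℝ)) ^ c * (1 - (c : ℝ) / ((p : ℝ) + 1)) := by
  have count := StreetParking.mul_card_isStreetParking (Nat.le_succ_of_le hcp)
  constructor
  · apply Nat.eq_of_mul_eq_mul_left p.succ_pos
    rw [← mul_assoc, mul_pow_sub_one (Nat.ne_of_gt hc), count]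
  · have hp : (p : ℝ) ≠ 0 := by
      exact_mod_cast Nat.ne_of_gt (hc.trans hcp)
    have count_real : ((p : ℝ) + 1) * Nat.card {s : Fin c → Fin p // IsStreetParking p c s} =
        (p + 1) ^ c * (p + 1 - c) := by
      have count_cast := congrArg (Nat.cast : ℕ → ℝ) count
      rwa [Nat.cast_mul, Nat.cast_mul, Nat.cast_sub (Nat.le_succ_of_le hcp), Nat.cast_pow,
        Nat.cast_add_one] at count_cast
    rw [one_add_div hp, one_sub_div (by positivity), div_pow, div_mul_div_comm, ← count_real]
    field_simp
end

section
/- (Lackner–Panholzer, Lemma 2.3) Let T be a rooted labelled tree on {1,…,n} and let s ∈ {1,…,n}^m. Then s is a tree parking function for T if and only if for every subset A ⊆ {1,…,n} that contains the root and is closed under the parent map of T (i.e., A is the vertex set of a subtree of T containing the root), one has #{k ∈ {1,…,m} : s_k ∈ A} ≤ |A|. -/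
/-- A rooted labelled tree on the vertex set `Fin n`, encoded by its root and its parent
map: the root is its own parent and every vertex reaches the root by iterating the parent
map (this data is equivalent to a tree on `{1,…,n}` with a distinguished root). -/
structure LabelledRootedTree (n : ℕ) where
  root : Fin n
  parent : Fin n → Fin n
  parent_root : parent root = root
  reaches_root : ∀ v : Fin n, ∃ k : ℕ, parent^[k] v = root

/-- The parking procedure driven by a step map `f` on `Fin n` (the parent map of a tree, or
an `n`-mapping).  `occ` is the list of occupied vertices; the drivers in the list arrive in
order, and the driver starting at `v` parks at `f^[i] v` for the least `i` such that
`f^[i] v` is unoccupied (searching `i < n` suffices, since the forward orbit of `v` has at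
most `n` distinct vertices, all appearing among the first `n` iterates, in visit order).
The result is `none` if some driver finds every vertex on its route occupied. -/
def parkAux (n : ℕ) (f : Fin n → Fin n) : List (Fin n) → List (Fin n) → Option (List (Fin n))
  | occ, [] => some occ
  | occ, v :: rest =>
    match (List.range n).find? (fun i => decide (f^[i] v ∉ occ)) with
    | none => none
    | some i => parkAux n f (f^[i] v :: occ) rest

/-- `s : Fin m → Fin n` is a parking function for the step map `f` on `Fin n`:
all `m` drivers, arriving in order with preferences `s 1, …, s m`, park successfully. -/
def ParkingSucceeds {n m : ℕ} (f : Fin n → Fin n) (s : Fin m → Fin n) : Prop :=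
  (parkAux n f [] (List.ofFn s)).isSome

/-- `s` is a tree parking function for the rooted labelled tree `T`: each driver `k` starts
at `s k` and drives towards the root, parking at the first unoccupied vertex. -/
def IsTreeParking {n m : ℕ} (T : LabelledRootedTree n) (s : Fin m → Fin n) : Prop :=
  ParkingSucceeds T.parent s

/-!
Cars only move along `f`, so drivers who start in an `f`-invariant set `A` park in `A`; if all of
them park, there are at most `|A|` of them. Conversely, suppose a driver finds its whole route
occupied, and let `A` consist of the vertices whose whole forward orbit is occupied at that moment.
It is `f`-invariant and full. A car parked in `A` has driven over occupied vertices only, so its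
driver started in `A` as well; together with the failing driver, more than `|A|` drivers prefer a
vertex of `A`. In a tree, the nonempty sets invariant under the parent map all contain the root.
-/

section Iterate

variable {α : Type*} {f : α → α}

theorem exists_lt_le_card_iterate_eq [Fintype α] (f : α → α) (x : α) :
    ∃ i j, i < j ∧ j ≤ Fintype.card α ∧ f^[i] x = f^[j] x := by
  obtain ⟨i, j, hij, heq⟩ := Fintype.exists_ne_map_eq_of_card_lt
    (fun k : Fin (Fintype.card α + 1) => f^[k] x) (by simp)
  wlog hlt : i < j generalizing i j
  · exact this j i hij.symm heq.symm (lt_of_le_of_ne (not_lt.1 hlt) hij.symm)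
  · exact ⟨i, j, hlt, Nat.lt_succ_iff.1 j.isLt, heq⟩

theorem exists_lt_card_iterate_eq [Fintype α] (f : α → α) (x : α) (k : ℕ) :
    ∃ i < Fintype.card α, f^[i] x = f^[k] x := by
  induction k using Nat.strong_induction_on with
  | _ k ih =>
    by_cases hk : k < Fintype.card α
    · exact ⟨k, hk, rfl⟩
    · obtain ⟨a, b, hab, hb, heq⟩ := exists_lt_le_card_iterate_eq f x
      obtain ⟨i, hi, hix⟩ := ih (k - b + a) (by omega)
      refine ⟨i, hi, ?_⟩
      calc f^[i] x = f^[k - b + a] x := hix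
        _ = f^[k - b + b] x := by
          rw [Function.iterate_add_apply, heq, ← Function.iterate_add_apply]
        _ = f^[k] x := by rw [Nat.sub_add_cancel (by omega)]

theorem mem_of_iterate_mem {S A : Set α} (hA : ∀ u ∈ S, f u ∈ A → u ∈ A) {x : α} {i : ℕ}
    (hroute : ∀ j < i, f^[j] x ∈ S) (hx : f^[i] x ∈ A) : x ∈ A := by
  induction i with
  | zero => exact hx
  | succ i ih =>
    refine ih (fun j hj => hroute j (hj.trans i.lt_succ_self)) ?_
    exact hA _ (hroute i i.lt_succ_self) (Function.iterate_succ_apply' f i x ▸ hx)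

/-- The largest `f`-invariant subset of `S`, described as the set of points whose whole forward
orbit lies in `S`. For `S` the set of occupied vertices, these are the vertices from which no
driver can park. -/
def invariantCore (f : α → α) (S : Set α) : Set α :=
  {x | ∀ i, f^[i] x ∈ S}

theorem invariantCore_subset (f : α → α) (S : Set α) : invariantCore f S ⊆ S :=
  fun _ hx => hx 0

theorem mapsTo_invariantCore (f : α → α) (S : Set α) :
    Set.MapsTo f (invariantCore f S) (invariantCore f S) :=
  fun _ hx i => hx (i + 1)

theorem mem_invariantCore_of_apply_mem {S : Set α} {x : α} (hxS : x ∈ S)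
    (hx : f x ∈ invariantCore f S) : x ∈ invariantCore f S
  | 0 => hxS
  | i + 1 => hx i

end Iterate

section Counting

variable {α : Type*} [DecidableEq α]

theorem countP_mem_le_card {l : List α} (hl : l.Nodup) (A : Finset α) :
    l.countP (· ∈ A) ≤ A.card := by
  rw [List.countP_eq_length_filter, ← List.toFinset_card_of_nodup (hl.filter _)]
  refine Finset.card_le_card fun x hx => ?_
  simpa using (List.mem_filter.1 (List.mem_toFinset.1 hx)).2

theorem card_le_countP_mem {l : List α} {A : Finset α} (hA : ∀ x ∈ A, x ∈ l) :
    A.card ≤ l.countP (· ∈ A) := by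
  rw [List.countP_eq_length_filter]
  refine (Finset.card_le_card fun x hx => ?_).trans (List.toFinset_card_le _)
  simpa [hx] using hA x hx

theorem card_filter_mem_eq_countP_ofFn {m : ℕ} (s : Fin m → α) (A : Finset α) :
    (Finset.univ.filter fun k => s k ∈ A).card = (List.ofFn s).countP (· ∈ A) := by
  rw [List.ofFn_eq_map, List.countP_map, List.countP_eq_length_filter]
  rfl

end Counting

section Parking

variable {n : ℕ} {f : Fin n → Fin n} {occ l : List (Fin n)}

theorem nodup_of_parkAux_eq_some {occ' : List (Fin n)} (hocc : occ.Nodup)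
    (hpark : parkAux n f occ l = some occ') : occ'.Nodup := by
  fun_induction parkAux n f occ l with
  | case1 occ => exact Option.some.inj hpark ▸ hocc
  | case2 => contradiction
  | case3 occ v rest i hi ih =>
    exact ih (hocc.cons (by simpa using List.find?_some hi)) hpark

theorem countP_add_countP_le_of_parkAux_eq_some {A : Finset (Fin n)} (hA : Set.MapsTo f A A)
    {occ' : List (Fin n)} (hpark : parkAux n f occ l = some occ') :
    occ.countP (· ∈ A) + l.countP (· ∈ A) ≤ occ'.countP (· ∈ A) := by
  fun_induction parkAux n f occ l with
  | case1 occ => simp [Option.some.inj hpark]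
  | case2 => contradiction
  | case3 occ v rest i _ ih =>
    have parks_in_A : v ∈ A → f^[i] v ∈ A := fun hv => hA.iterate i hv
    have hrest := ih hpark
    simp only [List.countP_cons, decide_eq_true_eq] at hrest ⊢
    grind

theorem mem_invariantCore_of_find?_eq_none {v : Fin n}
    (hfull : (List.range n).find? (fun i => decide (f^[i] v ∉ occ)) = none) :
    v ∈ invariantCore f {u | u ∈ occ} := by
  intro k
  obtain ⟨i, hi, hik⟩ := exists_lt_card_iterate_eq f v k
  rw [Fintype.card_fin] at hi
  simpa [hik] using List.find?_range_eq_none.1 hfull i hi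

/-- That occupied predecessors of vertices of `A` lie in `A` forces a car parked in `A` to have
started in `A`. Stated at the moment of failure, it holds at all earlier moments, where fewer
vertices are occupied; this is what the induction uses. -/
theorem exists_mapsTo_card_lt_of_parkAux_eq_none (hfail : parkAux n f occ l = none) :
    ∃ A : Finset (Fin n), Set.MapsTo f A A ∧ (∀ u ∈ occ, f u ∈ A → u ∈ A) ∧
      A.card < occ.countP (· ∈ A) + l.countP (· ∈ A) := by
  classical
  fun_induction parkAux n f occ l with
  | case1 => contradiction
  | case2 occ v rest hfull =>
    have hv := mem_invariantCore_of_find?_eq_none hfull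
    have hcard : (invariantCore f {u | u ∈ occ}).toFinset.card ≤
        occ.countP (· ∈ (invariantCore f {u | u ∈ occ}).toFinset) :=
      card_le_countP_mem fun u hu => invariantCore_subset f _ (Set.mem_toFinset.1 hu)
    refine ⟨(invariantCore f {u | u ∈ occ}).toFinset, ?_, fun u hu hfu => ?_, ?_⟩
    · simpa using mapsTo_invariantCore f {u | u ∈ occ}
    · exact Set.mem_toFinset.2 (mem_invariantCore_of_apply_mem hu (Set.mem_toFinset.1 hfu))
    · rw [List.countP_cons_of_pos (by simpa using hv)]
      omega
  | case3 occ v rest i hi ih =>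
    obtain ⟨A, hA, hpred, hcard⟩ := ih hfail
    have route_occupied : ∀ j < i, f^[j] v ∈ occ := fun j hj => by
      simpa using (List.find?_range_eq_some.1 hi).2.2 j hj
    have hpred_occ : ∀ u ∈ occ, f u ∈ A → u ∈ A :=
      fun u hu => hpred u (List.mem_cons_of_mem _ hu)
    have starts_in_A : f^[i] v ∈ A → v ∈ A :=
      mem_of_iterate_mem (S := {u | u ∈ occ}) (A := A) hpred_occ route_occupied
    refine ⟨A, hA, hpred_occ, ?_⟩
    simp only [List.countP_cons, decide_eq_true_eq] at hcard ⊢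
    grind

theorem lackner_panholzer_lemma_2_3_general {m : ℕ} (f : Fin n → Fin n) (s : Fin m → Fin n) :
    ParkingSucceeds f s ↔
      ∀ A : Finset (Fin n), Set.MapsTo f A A →
        (Finset.univ.filter fun k => s k ∈ A).card ≤ A.card := by
  simp only [ParkingSucceeds, card_filter_mem_eq_countP_ofFn]
  constructor
  · intro hpark A hA
    obtain ⟨occ, hocc⟩ := Option.isSome_iff_exists.1 hpark
    calc (List.ofFn s).countP (· ∈ A)
      _ ≤ occ.countP (· ∈ A) := by
        simpa using countP_add_countP_le_of_parkAux_eq_some hA hocc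
      _ ≤ A.card := countP_mem_le_card (nodup_of_parkAux_eq_some List.nodup_nil hocc) A
  · intro hcount
    by_contra hfail
    obtain ⟨A, hA, -, hcard⟩ :=
      exists_mapsTo_card_lt_of_parkAux_eq_none (Option.not_isSome_iff_eq_none.1 hfail)
    exact (hcount A hA).not_gt (by simpa using hcard)

end Parking

theorem LabelledRootedTree.root_mem_of_mapsTo {n : ℕ} (T : LabelledRootedTree n)
    {A : Set (Fin n)} (hA : Set.MapsTo T.parent A A) (hne : A.Nonempty) : T.root ∈ A := by
  obtain ⟨v, hv⟩ := hne
  obtain ⟨k, hk⟩ := T.reaches_root v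
  exact hk ▸ hA.iterate k hv

/-- (Lackner–Panholzer, Lemma 2.3) `s` is a tree parking function for `T` iff for every
subset `A` of the vertices containing the root and closed under the parent map (i.e. the
vertex set of a subtree of `T` containing the root), the number of drivers whose preferred
vertex lies in `A` is at most `|A|`. -/
theorem lackner_panholzer_lemma_2_3 (n m : ℕ) (hn : 1 ≤ n) (T : LabelledRootedTree n)
    (s : Fin m → Fin n) :
    IsTreeParking T s ↔
      ∀ A : Finset (Fin n), T.root ∈ A → (∀ v ∈ A, T.parent v ∈ A) →
        (Finset.univ.filter fun k : Fin m => s k ∈ A).card ≤ A.card := by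
  refine (lackner_panholzer_lemma_2_3_general T.parent s).trans
    ⟨fun h A _ hA => h A hA, fun h A hA => ?_⟩
  rcases A.eq_empty_or_nonempty with rfl | hne
  · simp
  · exact h A (T.root_mem_of_mapsTo hA hne) hA
end
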